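/- arXiv:1401.3807 — 9 statements merged into one kernel-verified Lean document; each statement's English description precedes it below -/
import Mathlib

section
/- Let 1 ≤ k ≤ n and for each i ∈ {1,…,k} let R_i be a subset of {1,…,n}. Suppose that |⋃_{i∈I} R_i| ≥ n − k + |I| for every nonempty subset I ⊆ {1,…,k}. Then for every i ∈ {1,…,k} there exists a subset R′_i ⊆ R_i such that |R′_i| = n − k + 1 for all i ∈ {1,…,k}, and |⋃_{i∈I} R′_i| ≥ n − k + |I| for every nonempty subset I ⊆ {1,…,k}. (Generalized Hall's theorem; for n = k this reduces to Hall's marriage theorem.) -/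
/-!
Delete elements from the sets `R i` until the family is minimal among those satisfying the
condition; singletons `I` then give `|R i| ≥ n - k + 1`, and it remains to exclude that some `R i`
has at least `n - k + 2` elements. If it does, take `x ≠ y` and suppose neither can be deleted from
`R i`. Failures occur at index sets `J ∪ {i}` and `K ∪ {i}` with `i ∉ J, K`. Together the two
reduced unions cover `R i` and all `R j` with `j ∈ J ∪ K`, while their intersection contains
`R i \ {x, y}` and all `R j` with `j ∈ J ∩ K`. The condition on `J ∪ K ∪ {i}` and on `J ∩ K` (or,
if `J ∩ K` is empty, the size of `R i`) makes the two unions too large for both to fail.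
-/

/-- The MDS condition for a family of subsets `R i ⊆ {1,…,n}`, `i ∈ {1,…,k}`:
`|⋃_{i ∈ I} R i| ≥ n - k + |I|` for every nonempty `I ⊆ {1,…,k}`. -/
def MDSCond (n k : ℕ) (R : Fin k → Finset (Fin n)) : Prop :=
  ∀ I : Finset (Fin k), I.Nonempty → n - k + I.card ≤ (I.biUnion R).card

section Surplus

open Finset Function

variable {ι α : Type*} [DecidableEq α] {d : ℕ} {R : ι → Finset α} {i : ι}

/-- Hall's condition with surplus `d`: any `m ≥ 1` members of the family have at least `d + m`
elements in their union. Hall's condition is the case `d = 0`, and `MDSCond n k` the case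
`d = n - k`. -/
def HasSurplus (d : ℕ) (R : ι → Finset α) : Prop :=
  ∀ I : Finset ι, I.Nonempty → d + #I ≤ #(I.biUnion R)

namespace HasSurplus

theorem add_one_le_card (hR : HasSurplus d R) (i : ι) : d + 1 ≤ #(R i) := by
  simpa only [card_singleton, singleton_biUnion] using hR {i} (singleton_nonempty i)

theorem add_card_add_one_le_card_union (hR : HasSurplus d R) {J : Finset ι} (hiJ : i ∉ J) :
    d + (#J + 1) ≤ #(R i ∪ J.biUnion R) := by
  classical
  simpa only [card_insert_of_notMem hiJ, biUnion_insert] using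
    hR (insert i J) (insert_nonempty i J)

theorem add_card_le_card_union (hR : HasSurplus d R) {S : Finset α} (hS : d ≤ #S)
    (J : Finset ι) : d + #J ≤ #(S ∪ J.biUnion R) := by
  rcases J.eq_empty_or_nonempty with rfl | hJ
  · simpa only [card_empty, add_zero, biUnion_empty, union_empty] using hS
  · exact (hR J hJ).trans (card_le_card subset_union_right)

theorem update_of_forall_notMem [DecidableEq ι] (hR : HasSurplus d R) {S : Finset α}
    (hS : ∀ J : Finset ι, i ∉ J → d + (#J + 1) ≤ #(S ∪ J.biUnion R)) :
    HasSurplus d (update R i S) := by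
  have biUnion_update {J : Finset ι} (hiJ : i ∉ J) : J.biUnion (update R i S) = J.biUnion R :=
    biUnion_congr rfl fun j hj => update_of_ne (ne_of_mem_of_not_mem hj hiJ) S R
  intro I hI
  by_cases hiI : i ∈ I
  · have hi_erase : i ∉ I.erase i := notMem_erase i I
    rw [← insert_erase hiI, card_insert_of_notMem hi_erase, biUnion_insert, update_self,
      biUnion_update hi_erase]
    exact hS _ hi_erase
  · rw [biUnion_update hiI]
    exact hR I hI

theorem le_card_erase_union_add_card_erase_union (hR : HasSurplus d R) (hcard : d + 2 ≤ #(R i))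
    {x y : α} (hxy : x ≠ y) {J K : Finset ι} (hiJ : i ∉ J) (hiK : i ∉ K) :
    (d + (#J + 1)) + (d + #K) ≤
      #((R i).erase x ∪ J.biUnion R) + #((R i).erase y ∪ K.biUnion R) := by
  classical
  set U := (R i).erase x ∪ J.biUnion R
  set V := (R i).erase y ∪ K.biUnion R
  have union_supset : R i ∪ (J ∪ K).biUnion R ⊆ U ∪ V := by grind
  have inter_supset : R i \ {x, y} ∪ (J ∩ K).biUnion R ⊆ U ∩ V := by grind
  have card_sdiff_pair : d ≤ #(R i \ {x, y}) := by
    have := le_card_sdiff {x, y} (R i)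
    rw [card_pair hxy] at this
    omega
  calc (d + (#J + 1)) + (d + #K)
      = (d + (#(J ∪ K) + 1)) + (d + #(J ∩ K)) := by
        have := card_union_add_card_inter J K
        omega
    _ ≤ #(R i ∪ (J ∪ K).biUnion R) + #(R i \ {x, y} ∪ (J ∩ K).biUnion R) :=
        add_le_add (hR.add_card_add_one_le_card_union (notMem_union.2 ⟨hiJ, hiK⟩))
          (hR.add_card_le_card_union card_sdiff_pair _)
    _ ≤ #(U ∪ V) + #(U ∩ V) := add_le_add (card_le_card union_supset) (card_le_card inter_supset)
    _ = #U + #V := card_union_add_card_inter U V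

theorem update_erase_or_update_erase [DecidableEq ι] (hR : HasSurplus d R)
    (hcard : d + 2 ≤ #(R i)) {x y : α} (hxy : x ≠ y) :
    HasSurplus d (update R i ((R i).erase x)) ∨ HasSurplus d (update R i ((R i).erase y)) := by
  by_contra! ⟨hx, hy⟩
  obtain ⟨J, hiJ, hJ⟩ : ∃ J, i ∉ J ∧ #((R i).erase x ∪ J.biUnion R) < d + (#J + 1) := by
    by_contra! h
    exact hx (hR.update_of_forall_notMem h)
  obtain ⟨K, hiK, hK⟩ : ∃ K, i ∉ K ∧ #((R i).erase y ∪ K.biUnion R) < d + (#K + 1) := by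
    by_contra! h
    exact hy (hR.update_of_forall_notMem h)
  have := hR.le_card_erase_union_add_card_erase_union hcard hxy hiJ hiK
  omega

theorem exists_update_erase [DecidableEq ι] (hR : HasSurplus d R) (hcard : d + 2 ≤ #(R i)) :
    ∃ x ∈ R i, HasSurplus d (update R i ((R i).erase x)) := by
  obtain ⟨x, hx, y, hy, hxy⟩ := one_lt_card.1 (show 1 < #(R i) by omega)
  rcases hR.update_erase_or_update_erase hcard hxy with h | h
  exacts [⟨x, hx, h⟩, ⟨y, hy, h⟩]

theorem card_eq_of_minimal (hR : Minimal (HasSurplus d) R) (i : ι) : #(R i) = d + 1 := by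
  classical
  refine le_antisymm ?_ (hR.prop.add_one_le_card i)
  by_contra! hcard
  obtain ⟨x, hx, herase⟩ := hR.prop.exists_update_erase hcard
  have update_lt : update R i ((R i).erase x) < R := update_lt_self_iff.2 (erase_ssubset hx)
  exact hR.not_prop_of_lt update_lt herase

end HasSurplus

theorem generalized_hall_general [Finite ι] (hR : HasSurplus d R) :
    ∃ R' : ι → Finset α, (∀ i, R' i ⊆ R i) ∧ (∀ i, #(R' i) = d + 1) ∧ HasSurplus d R' := by
  obtain ⟨R', hR'R, hmin⟩ := exists_minimal_le_of_wellFoundedLT (HasSurplus d) R hR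
  exact ⟨R', hR'R, HasSurplus.card_eq_of_minimal hmin, hmin.prop⟩

end Surplus

/-- Generalized Hall's theorem. -/
theorem generalized_hall (n k : ℕ) (hk : 1 ≤ k) (hkn : k ≤ n)
    (R : Fin k → Finset (Fin n)) (hMDS : MDSCond n k R) :
    ∃ R' : Fin k → Finset (Fin n),
      (∀ i, R' i ⊆ R i) ∧ (∀ i, (R' i).card = n - k + 1) ∧ MDSCond n k R' :=
  generalized_hall_general hMDS
end

section
/- Let 1 ≤ k ≤ n and let R_1,…,R_k be subsets of {1,…,n} satisfying the MDS condition. Suppose r ∈ {1,…,k} is such that |R_r| ≥ n − k + 2, and let a and b be two distinct elements of R_r. Then it is impossible that both reduced families violate the MDS condition; that is, either the family obtained from R_1,…,R_k by replacing R_r with R_r \ {a} satisfies the MDS condition, or the family obtained by replacing R_r with R_r \ {b} satisfies the MDS condition. -/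
section HallSurplus

open Finset Function

variable {ι α : Type*} [DecidableEq α] {d : ℕ} {R : ι → Finset α} {r : ι} {X Y : Finset α}

/-- Hall's condition with surplus `d`, for a family of finite sets indexed by an arbitrary type:
the MDS condition with `n - k` replaced by a free parameter. -/
def HasHallSurplus (d : ℕ) (R : ι → Finset α) : Prop :=
  ∀ I : Finset ι, I.Nonempty → d + #I ≤ #(I.biUnion R)

theorem mdsCond_iff_hasHallSurplus {n k : ℕ} {R : Fin k → Finset (Fin n)} :
    MDSCond n k R ↔ HasHallSurplus (n - k) R :=
  Iff.rfl

theorem HasHallSurplus.mono {S : ι → Finset α} (hR : HasHallSurplus d R) (hRS : R ≤ S) :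
    HasHallSurplus d S := fun I hI =>
  (hR I hI).trans (card_le_card (biUnion_mono fun i _ => hRS i))

theorem HasHallSurplus.add_card_le_card_biUnion_union (hR : HasHallSurplus d R) (hX : d ≤ #X)
    (I : Finset ι) : d + #I ≤ #(I.biUnion R ∪ X) := by
  rcases I.eq_empty_or_nonempty with rfl | hI
  · simpa using hX
  · exact (hR I hI).trans (card_le_card subset_union_left)

variable [DecidableEq ι]

theorem card_biUnion_union_submodular (R : ι → Finset α) (I J : Finset ι) (X Y : Finset α) :
    #((I ∪ J).biUnion R ∪ (X ∪ Y)) + #((I ∩ J).biUnion R ∪ (X ∩ Y)) ≤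
      #(I.biUnion R ∪ X) + #(J.biUnion R ∪ Y) := by
  have hunion : (I ∪ J).biUnion R ∪ (X ∪ Y) = (I.biUnion R ∪ X) ∪ (J.biUnion R ∪ Y) := by
    rw [union_biUnion, union_union_union_comm]
  have hinter : (I ∩ J).biUnion R ∪ (X ∩ Y) ⊆ (I.biUnion R ∪ X) ∩ (J.biUnion R ∪ Y) :=
    subset_inter
      (union_subset_union (biUnion_subset_biUnion_of_subset_left R inter_subset_left)
        inter_subset_left)
      (union_subset_union (biUnion_subset_biUnion_of_subset_left R inter_subset_right)
        inter_subset_right)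
  rw [hunion, ← card_union_add_card_inter (I.biUnion R ∪ X)]
  exact Nat.add_le_add_left (card_le_card hinter) _

theorem biUnion_update_of_notMem {I : Finset ι} (hr : r ∉ I) :
    I.biUnion (update R r X) = I.biUnion R :=
  biUnion_congr rfl fun _ hi => update_of_ne (ne_of_mem_of_not_mem hi hr) _ _

theorem biUnion_insert_update {I : Finset ι} (hr : r ∉ I) :
    (insert r I).biUnion (update R r X) = I.biUnion R ∪ X := by
  rw [biUnion_insert, update_self, biUnion_update_of_notMem hr, union_comm]

theorem HasHallSurplus.update_iff (hR : HasHallSurplus d R) :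
    HasHallSurplus d (update R r X) ↔
      ∀ I : Finset ι, r ∉ I → d + (#I + 1) ≤ #(I.biUnion R ∪ X) := by
  constructor
  · intro h I hr
    simpa only [card_insert_of_notMem hr, biUnion_insert_update hr] using
      h (insert r I) (insert_nonempty r I)
  · intro h I hI
    by_cases hr : r ∈ I
    · have hr' := notMem_erase r I
      rw [← insert_erase hr, card_insert_of_notMem hr', biUnion_insert_update hr']
      exact h (I.erase r) hr'
    · rw [biUnion_update_of_notMem hr]
      exact hR I hI

theorem le_card_sdiff_singleton_inter_sdiff_singleton {s : Finset α} (hs : d + 2 ≤ #s) (a b : α) :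
    d ≤ #((s \ {a}) ∩ (s \ {b})) :=
  calc
    d ≤ #s - #{a, b} := Nat.le_sub_of_add_le ((Nat.add_le_add_left card_le_two d).trans hs)
    _ ≤ #(s \ {a, b}) := le_card_sdiff _ _
    _ = #((s \ {a}) ∩ (s \ {b})) := by rw [insert_eq, sdiff_union_distrib]

theorem remove_one_of_two_preserves_mds_general (hR : HasHallSurplus d R)
    (hcover : R r ⊆ X ∪ Y) (hinter : d ≤ #(X ∩ Y)) :
    HasHallSurplus d (update R r X) ∨ HasHallSurplus d (update R r Y) := by
  rw [hR.update_iff, hR.update_iff]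
  by_contra! ⟨⟨I, hrI, hI⟩, J, hrJ, hJ⟩
  have hr : r ∉ I ∪ J := notMem_union.mpr ⟨hrI, hrJ⟩
  have hsup := hR.update_iff.mp (hR.mono (le_update_self_iff.mpr hcover)) (I ∪ J) hr
  have hinf := hR.add_card_le_card_biUnion_union hinter (I ∩ J)
  have hsubmod := card_biUnion_union_submodular R I J X Y
  have hcard := card_union_add_card_inter I J
  omega

end HallSurplus

/-- If `|R r| ≥ n - k + 2` and `a ≠ b` are two elements of `R r`, then removing `a` from
`R r` or removing `b` from `R r` preserves the MDS condition (at least one of the two). -/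
theorem remove_one_of_two_preserves_mds (n k : ℕ) (hk : 1 ≤ k) (hkn : k ≤ n)
    (R : Fin k → Finset (Fin n)) (hMDS : MDSCond n k R)
    (r : Fin k) (hr : n - k + 2 ≤ (R r).card)
    (a b : Fin n) (ha : a ∈ R r) (hb : b ∈ R r) (hab : a ≠ b) :
    MDSCond n k (Function.update R r (R r \ {a})) ∨
    MDSCond n k (Function.update R r (R r \ {b})) := by
  simp only [mdsCond_iff_hasHallSurplus] at hMDS ⊢
  have hcover : R r ⊆ (R r \ {a}) ∪ (R r \ {b}) := by
    rw [← Finset.sdiff_inter_distrib_right, Finset.singleton_inter_of_notMem (by simpa using hab),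
      Finset.sdiff_empty]
  exact remove_one_of_two_preserves_mds_general hMDS hcover
    (le_card_sdiff_singleton_inter_sdiff_singleton hr a b)
end

section
/- Let F(X_1,…,X_n) = det(A) · ∏_{1 ≤ j < i ≤ n} (X_i − X_j), a polynomial in the indeterminates X_1,…,X_n. Then for every t ∈ {1,…,n}, the degree of F in the variable X_t is at most n + k − 2. -/
/-!
A determinant whose `j`-th column has degree at most `d j` in `X_t` has degree at most `∑ j, d j`.
The coefficients of `f_i` are, up to sign, elementary symmetric in distinct variables, hence of
degree at most `1` in `X_t`, and the coefficient of `x ^ (k - 1)` is constant; this gives `k - 1`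
for `det A`. In the transposed Vandermonde matrix `X_t` occurs only in the `t`-th column, with
exponents at most `n - 1`; this gives `n - 1` for the product of differences.
-/

open Polynomial MvPolynomial

/-- The coefficient matrix `A = (a_{i,j})` where
`f_i(x) = ∏_{t ∈ Z i} (x - X_t) = ∑_{j=1}^k a_{i,j} x^{j-1}`
(with `0`-based index `j`, `a i j` is the coefficient of `x^j` in `f i`). -/
noncomputable def coeffMatrix (F : Type*) [Field F] (n k : ℕ)
    (Z : Fin k → Finset (Fin n)) : Matrix (Fin k) (Fin k) (MvPolynomial (Fin n) F) :=
  Matrix.of fun i j =>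
    (∏ t ∈ Z i, (Polynomial.X - Polynomial.C (MvPolynomial.X t) :
        Polynomial (MvPolynomial (Fin n) F))).coeff (j : ℕ)

section

open Finset

variable {σ R : Type*} [CommRing R]

lemma degreeOf_det_le_sum {ι : Type*} [DecidableEq ι] [Fintype ι] (t : σ)
    (M : Matrix ι ι (MvPolynomial σ R)) (d : ι → ℕ)
    (hd : ∀ i j, degreeOf t (M i j) ≤ d j) :
    degreeOf t M.det ≤ ∑ j, d j := by
  rw [Matrix.det_apply]
  refine (degreeOf_sum_le t _ _).trans (Finset.sup_le fun τ _ ↦ ?_)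
  have hsign : degreeOf t (Equiv.Perm.sign τ • ∏ j, M (τ j) j) = degreeOf t (∏ j, M (τ j) j) := by
    obtain h | h := Int.units_eq_one_or (Equiv.Perm.sign τ) <;> simp [h, degreeOf_neg]
  rw [hsign]
  exact (degreeOf_prod_le t _ _).trans (sum_le_sum fun j _ ↦ hd (τ j) j)

lemma degreeOf_X_le [DecidableEq σ] (t i : σ) :
    degreeOf t (MvPolynomial.X i : MvPolynomial σ R) ≤ if t = i then 1 else 0 := by
  rw [degreeOf_def, ← Multiset.count_singleton]
  exact Multiset.count_le_of_le t (degrees_X' i)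

lemma degreeOf_coeff_nodal_X_le (t : σ) (S : Finset σ) (j : ℕ) :
    degreeOf t ((Lagrange.nodal S (MvPolynomial.X : σ → MvPolynomial σ R)).coeff j) ≤
      if j < #S then 1 else 0 := by
  classical
  obtain hj | hj := lt_or_ge #S j
  · have hdeg : (Lagrange.nodal S (MvPolynomial.X : σ → MvPolynomial σ R)).natDegree ≤ #S := by
      nontriviality R
      exact Lagrange.natDegree_nodal.le
    rw [coeff_eq_zero_of_natDegree_lt (hdeg.trans_lt hj), degreeOf_zero]
    exact Nat.zero_le _
  have hcoeff : (Lagrange.nodal S (MvPolynomial.X : σ → MvPolynomial σ R)).coeff j =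
      ∑ T ∈ S.powersetCard (#S - j), ∏ s ∈ T, -MvPolynomial.X s := by
    simp_rw [Lagrange.nodal_eq, sub_eq_add_neg, ← Polynomial.C_neg, prod_X_add_C_coeff S _ hj]
  rw [hcoeff]
  refine (degreeOf_sum_le t _ _).trans (Finset.sup_le fun T hT ↦ ?_)
  calc degreeOf t (∏ s ∈ T, -MvPolynomial.X s : MvPolynomial σ R)
      ≤ ∑ s ∈ T, degreeOf t (-MvPolynomial.X s : MvPolynomial σ R) := degreeOf_prod_le t _ _
    _ ≤ ∑ s ∈ T, if t = s then 1 else 0 :=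
      sum_le_sum fun s _ ↦ (degreeOf_neg t _).trans_le (degreeOf_X_le t s)
    _ = if t ∈ T then 1 else 0 := sum_ite_eq T t _
    _ ≤ if j < #S then 1 else 0 := by
      have hcard : #T = #S - j := (mem_powersetCard.mp hT).2
      have hpos : t ∈ T → 0 < #T := fun ht ↦ card_pos.mpr ⟨t, ht⟩
      grind

lemma degreeOf_det_coeff_nodal_X_le {k : ℕ} (Z : Fin k → Finset σ) (hZ : ∀ i, #(Z i) < k)
    (t : σ) :
    degreeOf t (Matrix.of fun i j : Fin k ↦
      (Lagrange.nodal (Z i) (MvPolynomial.X : σ → MvPolynomial σ R)).coeff j).det ≤ k - 1 := by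
  calc _ ≤ ∑ j : Fin k, if (j : ℕ) < k - 1 then 1 else 0 :=
        degreeOf_det_le_sum t _ _ fun i j ↦ (degreeOf_coeff_nodal_X_le t (Z i) j).trans (by grind)
    _ = min k (k - 1) := by rw [← card_filter, Fin.card_filter_val_lt]
    _ ≤ k - 1 := Nat.min_le_right _ _

lemma degreeOf_det_vandermonde_X_le {n : ℕ} (t : Fin n) :
    degreeOf t (Matrix.vandermonde (MvPolynomial.X : Fin n → MvPolynomial (Fin n) R)).det ≤
      n - 1 := by
  rw [← Matrix.det_transpose]
  refine (degreeOf_det_le_sum t _ (fun i ↦ if t = i then n - 1 else 0) fun j i ↦ ?_).trans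
    (Fintype.sum_ite_eq t _).le
  calc degreeOf t (MvPolynomial.X i ^ (j : ℕ) : MvPolynomial (Fin n) R)
      ≤ j * degreeOf t (MvPolynomial.X i : MvPolynomial (Fin n) R) := degreeOf_pow_le t _ _
    _ ≤ j * if t = i then 1 else 0 := Nat.mul_le_mul_left _ (degreeOf_X_le t i)
    _ ≤ if t = i then n - 1 else 0 := by grind

lemma prod_prod_lt_sub_eq_det_vandermonde {n : ℕ} (v : Fin n → R) :
    ∏ i, ∏ j ∈ univ.filter (· < i), (v i - v j) = (Matrix.vandermonde v).det := by
  rw [Matrix.det_vandermonde]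
  exact prod_comm' (by simp)

end

theorem degreeOf_det_mul_vandermonde_le_general {R : Type*} [CommRing R] {n k : ℕ} (hk : 1 ≤ k)
    (Z : Fin k → Finset (Fin n)) (hZ : ∀ i, (Z i).card < k) (t : Fin n) :
    degreeOf t
      ((Matrix.of fun i j : Fin k ↦
          (Lagrange.nodal (Z i) (MvPolynomial.X : Fin n → MvPolynomial (Fin n) R)).coeff j).det *
        ∏ i : Fin n, ∏ j ∈ Finset.univ.filter (· < i),
          (MvPolynomial.X i - MvPolynomial.X j)) ≤ n + k - 2 := by
  rw [prod_prod_lt_sub_eq_det_vandermonde MvPolynomial.X]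
  refine (degreeOf_mul_le t _ _).trans ?_
  have hcoeff := degreeOf_det_coeff_nodal_X_le (R := R) Z hZ t
  have hvandermonde := degreeOf_det_vandermonde_X_le (R := R) t
  have hn : 1 ≤ n := t.pos
  lia

/-- The degree of `F(X_1,…,X_n) = det A ⋅ ∏_{j < i} (X_i - X_j)` in each variable `X_t`
is at most `n + k - 2`. -/
theorem degreeOf_det_mul_vandermonde_le (F : Type*) [Field F] (n k : ℕ)
    (hk : 1 ≤ k) (hkn : k ≤ n)
    (Z : Fin k → Finset (Fin n)) (hZ : ∀ i, (Z i).card = k - 1) (t : Fin n) :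
    MvPolynomial.degreeOf t
      ((coeffMatrix F n k Z).det *
        ∏ i : Fin n, ∏ j ∈ Finset.univ.filter (· < i),
          (MvPolynomial.X i - MvPolynomial.X j)) ≤ n + k - 2 :=
  degreeOf_det_mul_vandermonde_le_general hk Z (fun i ↦ (hZ i).trans_lt (Nat.sub_one_lt_of_lt hk)) t
end

section
/- Suppose there exists a choice (σ, (S_1,…,S_k)) whose value is unique, i.e., every choice (σ′, (S′_1,…,S′_k)) whose value equals the multiset S_1 ⊎ ⋯ ⊎ S_k satisfies σ′ = σ and S′_i = S_i for all i. Then det(A) is not the zero polynomial. -/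
/-!
Expanding `∏_{t ∈ Z_i} (x - X_t)`, the coefficient of `x^d` is the sum of `∏_{t ∈ S} (-X_t)` over
the subsets `S ⊆ Z_i` whose complement in `Z_i` has `d` elements. The Leibniz formula therefore
turns `det A` into a sum over choices, in which a choice with value `m` contributes
`± (-1)^|m| ∏_{t ∈ m} X_t`, the first sign being that of the permutation in its Leibniz term. So the
coefficient of the monomial of `m` is, up to sign, the signed number of choices with value `m`, and
it is `±1` when there is exactly one.
-/

open Polynomial MvPolynomial

/-- A choice for the family `Z`: a permutation `σ` of `{1,…,k}` together with subsets
`S i ⊆ Z i` of cardinality `σ(i) - 1` (here `(σ i : ℕ)`, with `0`-based indexing). -/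
def IsChoice (n k : ℕ) (Z : Fin k → Finset (Fin n))
    (σ : Equiv.Perm (Fin k)) (S : Fin k → Finset (Fin n)) : Prop :=
  ∀ i, S i ⊆ Z i ∧ (S i).card = (σ i : ℕ)

/-- The value of a choice: the multiset union `S 1 ⊎ ⋯ ⊎ S k`. -/
def choiceValue (n k : ℕ) (S : Fin k → Finset (Fin n)) : Multiset (Fin n) :=
  ∑ i : Fin k, (S i).val

section

open Finset

/-- The matrix whose `(i, j)` entry is the coefficient of `x ^ d j` in `∏_{t ∈ Z i} (x - X_t)`:
`coeffMatrix` with the coefficients read off at prescribed degrees `d`. -/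
noncomputable def rootCoeffMatrix {ι κ τ : Type*} (R : Type*) [CommRing R] (Z : ι → Finset τ)
    (d : κ → ℕ) : Matrix ι κ (MvPolynomial τ R) :=
  Matrix.of fun i j =>
    (∏ t ∈ Z i, (Polynomial.X - Polynomial.C (MvPolynomial.X t) :
      Polynomial (MvPolynomial τ R))).coeff (d j)

lemma coeff_prod_X_sub_C {τ A : Type*} [CommRing A] (s : Finset τ) (r : τ → A) (m : ℕ) :
    (∏ t ∈ s, (Polynomial.X - Polynomial.C (r t))).coeff m =
      ∑ S ∈ s.powerset with #S + m = #s, ∏ t ∈ S, -r t := by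
  classical
  have expand : ∏ t ∈ s, (Polynomial.X - Polynomial.C (r t)) =
      ∑ S ∈ s.powerset, Polynomial.C (∏ t ∈ S, -r t) * Polynomial.X ^ #(s \ S) := by
    simp only [sub_eq_neg_add, ← Polynomial.C_neg, prod_add, prod_const, map_prod]
  simp only [expand, Polynomial.finsetSum_coeff, Polynomial.coeff_C_mul_X_pow, sum_filter]
  refine sum_congr rfl fun S hS => if_congr ?_ rfl rfl
  have := card_sdiff_add_card_eq_card (mem_powerset.1 hS)
  lia

lemma prod_map_neg_X {τ : Type*} (R : Type*) [CommRing R] [DecidableEq τ] (m : Multiset τ) :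
    (m.map fun t => -(MvPolynomial.X t : MvPolynomial τ R)).prod =
      MvPolynomial.monomial (Multiset.toFinsupp m) ((-1) ^ Multiset.card m) := by
  induction m using Multiset.induction_on with
  | empty => simp
  | cons t m ih =>
    rw [Multiset.map_cons, Multiset.prod_cons, ih, ← Multiset.singleton_add, map_add,
      Multiset.toFinsupp_singleton, MvPolynomial.X, ← map_neg, MvPolynomial.monomial_mul,
      Multiset.card_add, Multiset.card_singleton, pow_add, pow_one]

variable {ι τ : Type*} [Fintype ι]

lemma prod_prod_neg_X (R : Type*) [CommRing R] [DecidableEq τ] (S : ι → Finset τ) :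
    ∏ i, ∏ t ∈ S i, -(MvPolynomial.X t : MvPolynomial τ R) =
      MvPolynomial.monomial (Multiset.toFinsupp (∑ i, (S i).val))
        ((-1) ^ Multiset.card (∑ i, (S i).val)) := by
  rw [← prod_map_neg_X, ← Multiset.coe_mapAddMonoidHom, map_sum, Multiset.prod_sum]
  rfl

variable [DecidableEq ι]

/-- The analogue of choices for `rootCoeffMatrix`: pairs of a permutation `π` and subsets
`S i ⊆ Z i` that leave out `d (π i)` elements of `Z i`. Prescribing the number of omitted elements
makes `π` the permutation of the Leibniz term to which the pair contributes; in `IsChoice` that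
permutation appears reversed. -/
def selections (Z : ι → Finset τ) (d : ι → ℕ) : Finset (Σ _ : Equiv.Perm ι, ι → Finset τ) :=
  univ.sigma fun π => Fintype.piFinset fun i => {S ∈ (Z i).powerset | #S + d (π i) = #(Z i)}

lemma mem_selections {Z : ι → Finset τ} {d : ι → ℕ} {p : Σ _ : Equiv.Perm ι, ι → Finset τ} :
    p ∈ selections Z d ↔ ∀ i, p.2 i ⊆ Z i ∧ #(p.2 i) + d (p.1 i) = #(Z i) := by
  simp [selections]

lemma det_rootCoeffMatrix (R : Type*) [CommRing R] [DecidableEq τ] (Z : ι → Finset τ)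
    (d : ι → ℕ) :
    (rootCoeffMatrix R Z d).det =
      ∑ p ∈ selections Z d, MvPolynomial.monomial (Multiset.toFinsupp (∑ i, (p.2 i).val))
        ((-1) ^ Multiset.card (∑ i, (p.2 i).val) * ((Equiv.Perm.sign p.1 : ℤ) : R)) := by
  rw [← Matrix.det_transpose, Matrix.det_apply', selections, sum_sigma]
  refine sum_congr rfl fun π _ => ?_
  simp only [Matrix.transpose_apply, rootCoeffMatrix, Matrix.of_apply, coeff_prod_X_sub_C,
    prod_univ_sum, prod_prod_neg_X, mul_sum]
  refine sum_congr rfl fun S _ => ?_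
  rw [← map_intCast (MvPolynomial.C (σ := τ) (R := R)), MvPolynomial.C_mul_monomial, mul_comm]

lemma coeff_det_rootCoeffMatrix (R : Type*) [CommRing R] [DecidableEq τ] (Z : ι → Finset τ)
    (d : ι → ℕ) (m : Multiset τ) :
    ((rootCoeffMatrix R Z d).det).coeff (Multiset.toFinsupp m) =
      (-1) ^ Multiset.card m *
        ∑ p ∈ selections Z d with ∑ i, (p.2 i).val = m, ((Equiv.Perm.sign p.1 : ℤ) : R) := by
  simp only [det_rootCoeffMatrix, MvPolynomial.coeff_sum, MvPolynomial.coeff_monomial,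
    EmbeddingLike.apply_eq_iff_eq, mul_sum, sum_filter]
  refine sum_congr rfl fun p _ => ?_
  split_ifs with h
  · rw [h]
  · rw [mul_zero]

theorem det_ne_zero_of_unique_multiset_general (R : Type*) [CommRing R] [Nontrivial R]
    (Z : ι → Finset τ) (d : ι → ℕ)
    (huniq : ∃ p ∈ selections Z d, ∀ q ∈ selections Z d,
      ∑ i, (q.2 i).val = ∑ i, (p.2 i).val → q = p) :
    (rootCoeffMatrix R Z d).det ≠ 0 := by
  classical
  obtain ⟨p, hp, huniq⟩ := huniq
  have filter_eq : {q ∈ selections Z d | ∑ i, (q.2 i).val = ∑ i, (p.2 i).val} = {p} :=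
    eq_singleton_iff_unique_mem.2
      ⟨mem_filter.2 ⟨hp, rfl⟩, fun q hq => huniq q (mem_filter.1 hq).1 (mem_filter.1 hq).2⟩
  have isUnit_coeff : IsUnit
      ((rootCoeffMatrix R Z d).det.coeff (Multiset.toFinsupp (∑ i, (p.2 i).val))) := by
    rw [coeff_det_rootCoeffMatrix, filter_eq, sum_singleton]
    exact (isUnit_one.neg.pow _).mul ((Equiv.Perm.sign p.1).isUnit.map (Int.castRingHom R))
  intro h
  rw [h, MvPolynomial.coeff_zero] at isUnit_coeff
  exact not_isUnit_zero isUnit_coeff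

lemma isChoice_iff_mem_selections {n k : ℕ} {Z S : Fin k → Finset (Fin n)}
    (hZ : ∀ i, #(Z i) = k - 1) {π : Equiv.Perm (Fin k)} :
    IsChoice n k Z (π.trans Fin.revPerm) S ↔ ⟨π, S⟩ ∈ selections Z fun j => j := by
  simp only [IsChoice, mem_selections, hZ, Equiv.trans_apply, Fin.revPerm_apply, Fin.val_rev]
  refine forall_congr' fun i => and_congr_right fun _ => ?_
  lia

lemma exists_unique_selection_of_exists_unique_choice {n k : ℕ} {Z : Fin k → Finset (Fin n)}
    (hZ : ∀ i, #(Z i) = k - 1)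
    (huniq : ∃ (σ : Equiv.Perm (Fin k)) (S : Fin k → Finset (Fin n)),
      IsChoice n k Z σ S ∧
      ∀ (σ' : Equiv.Perm (Fin k)) (S' : Fin k → Finset (Fin n)),
        IsChoice n k Z σ' S' → choiceValue n k S' = choiceValue n k S → σ' = σ ∧ S' = S) :
    ∃ p ∈ selections Z fun j => j, ∀ q ∈ selections Z fun j => j,
      ∑ i, (q.2 i).val = ∑ i, (p.2 i).val → q = p := by
  obtain ⟨σ, S, hS, huniq⟩ := huniq
  obtain ⟨π, rfl⟩ : ∃ π : Equiv.Perm (Fin k), π.trans Fin.revPerm = σ :=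
    ⟨σ.trans Fin.revPerm, by ext; simp⟩
  refine ⟨⟨π, S⟩, (isChoice_iff_mem_selections hZ).1 hS, ?_⟩
  rintro ⟨π', S'⟩ hq hvalue
  obtain ⟨hπ, rfl⟩ := huniq _ S' ((isChoice_iff_mem_selections hZ).2 hq) hvalue
  obtain rfl : π' = π := Equiv.ext fun i => Fin.rev_injective (Equiv.congr_fun hπ i)
  rfl

end

/-- If some choice has a unique value among all choices, then `det A ≠ 0`. -/
theorem det_ne_zero_of_unique_multiset (F : Type*) [Field F] (n k : ℕ)
    (hk : 1 ≤ k) (hkn : k ≤ n)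
    (Z : Fin k → Finset (Fin n)) (hZ : ∀ i, (Z i).card = k - 1)
    (huniq : ∃ (σ : Equiv.Perm (Fin k)) (S : Fin k → Finset (Fin n)),
      IsChoice n k Z σ S ∧
      ∀ (σ' : Equiv.Perm (Fin k)) (S' : Fin k → Finset (Fin n)),
        IsChoice n k Z σ' S' → choiceValue n k S' = choiceValue n k S →
          σ' = σ ∧ S' = S) :
    (coeffMatrix F n k Z).det ≠ 0 :=
  det_ne_zero_of_unique_multiset_general F Z (fun j => j)
    (exists_unique_selection_of_exists_unique_choice hZ huniq)
end

section
/- Let 1 ≤ k ≤ n and let Z_1,…,Z_k be (k−1)-element subsets of {1,…,n} satisfying |⋂_{i∈I} Z_i| ≤ k − |I| for every nonempty subset I ⊆ {1,…,k}. Suppose there exists a choice (σ, (S_1,…,S_k)) whose value is unique among all choices (i.e., every choice with the same value multiset equals it, with the same permutation and the same subsets). Then for every finite field F_q with q ≥ n + k − 1 elements there exists a k×n matrix G over F_q such that G_{i,j} = 0 whenever j ∈ Z_i, and every set of k columns of G is linearly independent (so G generates an [n,k] MDS code). -/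
open Matrix MvPolynomial

/-- The coefficient matrix of the polynomials `t ^ (k - 1 - #(Z i)) * ∏_{l ∈ Z i} (x l + t)`,
whose vanishing at the points `- x j`, `j ∈ Z i`, produces the prescribed zeros of the code. Columns
run from the leading coefficient downwards, so that column `r` holds elementary symmetric functions
of degree `r`; `#(Z i) < k` is intended. -/
def esymmMatrix {ι κ R : Type*} [CommSemiring R] (k : ℕ) (Z : κ → Finset ι) (x : ι → R) :
    Matrix κ (Fin k) R :=
  Matrix.of fun i r => ((Z i).val.map x).esymm r

section Evaluation

variable {ι κ R : Type*} {k : ℕ}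

theorem sum_esymm_mul_pow_rev [CommSemiring R] {s : Multiset R} (hs : s.card < k) (t : R) :
    ∑ r : Fin k, s.esymm r * t ^ (r.rev : ℕ) =
      t ^ (k - 1 - s.card) * (s.map fun a => t + a).prod := by
  have hprod : (s.map fun a => t + a).prod =
      ∑ r ∈ Finset.range (s.card + 1), s.esymm r * t ^ (s.card - r) := by
    simpa [Polynomial.eval_multiset_prod, Polynomial.eval_finsetSum] using
      congrArg (Polynomial.eval t) s.prod_X_add_C_eq_sum_esymm
  have hzero : ∀ r ∈ Finset.range k, r ∉ Finset.range (s.card + 1) →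
      s.esymm r * t ^ (k - (r + 1)) = 0 := by
    intro r _ hr
    have hcard : s.card < r := by simpa using hr
    simp [Multiset.esymm, Multiset.powersetCard_eq_empty r hcard]
  simp only [Fin.val_rev]
  rw [Fin.sum_univ_eq_sum_range fun r => s.esymm r * t ^ (k - (r + 1)),
    ← Finset.sum_subset (Finset.range_mono hs) hzero, hprod, Finset.mul_sum]
  refine Finset.sum_congr rfl fun r hr => ?_
  rw [mul_left_comm, ← pow_add]
  congr 2
  have := Finset.mem_range.1 hr
  omega

variable [CommRing R]

theorem esymmMatrix_mul_transpose_rectVandermonde_apply {Z : κ → Finset ι} {i : κ}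
    (hZ : (Z i).card < k) (x y : ι → R) (j : ι) :
    (esymmMatrix k Z x * (rectVandermonde 1 y k)ᵀ) i j =
      y j ^ (k - 1 - (Z i).card) * ∏ l ∈ Z i, (y j + x l) := by
  have hcard : ((Z i).val.map x).card < k := by simpa using hZ
  simpa [Matrix.mul_apply, esymmMatrix, rectVandermonde_apply] using
    sum_esymm_mul_pow_rev hcard (y j)

theorem det_projVandermonde_one_ne_zero [IsDomain R] {y : Fin k → R} (hy : Function.Injective y) :
    (projVandermonde 1 y).det ≠ 0 := by
  simp only [det_projVandermonde, Pi.one_apply, one_mul, Finset.prod_ne_zero_iff, Finset.mem_Ioi,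
    sub_ne_zero]
  exact fun i _ j hij => hy.ne hij.ne

theorem linearIndependent_col_mul_transpose_rectVandermonde [IsDomain R]
    {A : Matrix (Fin k) (Fin k) R} (hA : A.det ≠ 0) {y : ι → R} (hy : Function.Injective y)
    {s : Finset ι} (hs : s.card = k) :
    LinearIndependent R fun j : s => (A * (rectVandermonde 1 y k)ᵀ).col j := by
  let e : Fin k ≃ s := (s.equivFinOfCardEq hs).symm
  have hdet : (A * (projVandermonde 1 fun a => y (e a))ᵀ).det ≠ 0 := by
    rw [det_mul, det_transpose]
    exact mul_ne_zero hA
      (det_projVandermonde_one_ne_zero (hy.comp (Subtype.val_injective.comp e.injective)))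
  rw [← linearIndependent_equiv e]
  exact linearIndependent_cols_of_det_ne_zero hdet

theorem exists_mds_matrix_of_det_esymmMatrix_ne_zero [IsDomain R] {Z : Fin k → Finset ι}
    (hZ : ∀ i, (Z i).card < k) {x : ι → R} (hx : Function.Injective x)
    (hdet : (esymmMatrix k Z x).det ≠ 0) :
    ∃ G : Matrix (Fin k) ι R, (∀ i, ∀ j ∈ Z i, G i j = 0) ∧
      ∀ s : Finset ι, s.card = k → LinearIndependent R fun j : s => G.col j := by
  refine ⟨esymmMatrix k Z x * (rectVandermonde 1 (-x) k)ᵀ, fun i j hj => ?_, fun s hs =>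
    linearIndependent_col_mul_transpose_rectVandermonde hdet (neg_injective.comp hx) hs⟩
  rw [esymmMatrix_mul_transpose_rectVandermonde_apply (hZ i),
    Finset.prod_eq_zero hj (neg_add_cancel (x j)), mul_zero]

end Evaluation

theorem map_esymmMatrix {ι κ R R' : Type*} [CommSemiring R] [CommSemiring R'] (k : ℕ)
    (Z : κ → Finset ι) (x : ι → R) (f : R →+* R') :
    (esymmMatrix k Z x).map f = esymmMatrix k Z (f ∘ x) := by
  ext i r
  simp [esymmMatrix, Finset.esymm_map_val]

section Expansion

variable {R : Type*} {n k : ℕ}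

theorem prod_prod_X_eq_monomial_choiceValue [CommSemiring R] (S : Fin k → Finset (Fin n)) :
    ∏ i, ∏ j ∈ S i, (X j : MvPolynomial (Fin n) R) =
      monomial (Multiset.toFinsupp (choiceValue n k S)) 1 := by
  have hval (i : Fin k) : Multiset.toFinsupp (S i).val = ∑ j ∈ S i, Finsupp.single j 1 := by
    rw [← Finset.sum_multiset_singleton, map_sum]
    simp only [Multiset.toFinsupp_singleton]
  simp only [choiceValue, map_sum, hval, monomial_sum_one, X]

open scoped Classical in
theorem det_esymmMatrix_X [CommRing R] (Z : Fin k → Finset (Fin n)) :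
    (esymmMatrix k Z (X : Fin n → MvPolynomial (Fin n) R)).det =
      ∑ c : Equiv.Perm (Fin k) × (Fin k → Finset (Fin n)) with IsChoice n k Z c.1 c.2,
        monomial (Multiset.toFinsupp (choiceValue n k c.2)) ((Equiv.Perm.sign c.1 : ℤ) : R) := by
  have hchoices (σ : Equiv.Perm (Fin k)) :
      Fintype.piFinset (fun i => (Z i).powersetCard (σ i)) =
        Finset.univ.filter (IsChoice n k Z σ) := by
    ext S
    simp [IsChoice]
  rw [← det_transpose, det_apply', Finset.sum_filter, Fintype.sum_prod_type]
  refine Finset.sum_congr rfl fun σ _ => ?_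
  simp only [transpose_apply, esymmMatrix, of_apply, Finset.esymm_map_val, Finset.prod_univ_sum,
    hchoices, prod_prod_X_eq_monomial_choiceValue, Finset.mul_sum, ← Finset.sum_filter]
  refine Finset.sum_congr rfl fun S _ => ?_
  rw [← map_intCast (C : R →+* MvPolynomial (Fin n) R), C_mul_monomial, mul_one]

theorem coeff_choiceValue_det_esymmMatrix_X [CommRing R] {Z : Fin k → Finset (Fin n)}
    {σ : Equiv.Perm (Fin k)} {S : Fin k → Finset (Fin n)} (hS : IsChoice n k Z σ S)
    (huniq : ∀ (σ' : Equiv.Perm (Fin k)) (S' : Fin k → Finset (Fin n)),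
      IsChoice n k Z σ' S' → choiceValue n k S' = choiceValue n k S → σ' = σ ∧ S' = S) :
    coeff (Multiset.toFinsupp (choiceValue n k S))
      (esymmMatrix k Z (X : Fin n → MvPolynomial (Fin n) R)).det =
        ((Equiv.Perm.sign σ : ℤ) : R) := by
  classical
  rw [det_esymmMatrix_X, coeff_sum, Finset.sum_eq_single_of_mem (σ, S) (by simpa using hS)]
  · rw [coeff_monomial, if_pos rfl]
  · rintro ⟨σ', S'⟩ hmem hne
    rw [coeff_monomial, if_neg]
    intro hvalue
    obtain ⟨rfl, rfl⟩ :=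
      huniq σ' S' (Finset.mem_filter.1 hmem).2 (Multiset.toFinsupp.injective hvalue)
    exact hne rfl

theorem det_esymmMatrix_X_ne_zero [CommRing R] [Nontrivial R] {Z : Fin k → Finset (Fin n)}
    {σ : Equiv.Perm (Fin k)} {S : Fin k → Finset (Fin n)} (hS : IsChoice n k Z σ S)
    (huniq : ∀ (σ' : Equiv.Perm (Fin k)) (S' : Fin k → Finset (Fin n)),
      IsChoice n k Z σ' S' → choiceValue n k S' = choiceValue n k S → σ' = σ ∧ S' = S) :
    (esymmMatrix k Z (X : Fin n → MvPolynomial (Fin n) R)).det ≠ 0 := by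
  have hunit : IsUnit ((Equiv.Perm.sign σ : ℤ) : R) :=
    (Equiv.Perm.sign σ).isUnit.map (Int.castRingHom R)
  intro hdet
  refine hunit.ne_zero ?_
  rw [← coeff_choiceValue_det_esymmMatrix_X hS huniq, hdet, coeff_zero]

end Expansion

section Degree

variable {ι R : Type*}

theorem degreeOf_esymm_X_le [CommSemiring R] [Nontrivial R] (s : Finset ι) (r : ℕ) (l : ι) :
    ((s.val.map (X : ι → MvPolynomial ι R)).esymm r).degreeOf l ≤ min r 1 := by
  classical
  rw [Finset.esymm_map_val]
  refine (degreeOf_sum_le _ _ _).trans (Finset.sup_le fun T hT => ?_)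
  refine (degreeOf_prod_le _ _ _).trans ?_
  rw [← (Finset.mem_powersetCard.1 hT).2]
  simp only [degreeOf_X, Finset.sum_ite_eq]
  split_ifs with hl
  · exact le_min (Finset.card_pos.2 ⟨l, hl⟩) le_rfl
  · exact Nat.zero_le _

variable [CommRing R]

theorem degreeOf_det_le {m : Type*} [Fintype m] [DecidableEq m] {d : ℕ} {l : ι}
    {M : Matrix m m (MvPolynomial ι R)}
    (hM : ∀ σ : Equiv.Perm m, ∑ i, (M i (σ i)).degreeOf l ≤ d) :
    M.det.degreeOf l ≤ d := by
  rw [← det_transpose, det_apply']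
  refine (degreeOf_sum_le _ _ _).trans (Finset.sup_le fun σ _ => ?_)
  rw [← map_intCast (C : R →+* MvPolynomial ι R)]
  exact (degreeOf_C_mul_le _ _ _).trans ((degreeOf_prod_le _ _ _).trans (hM σ))

variable [Nontrivial R]

theorem degreeOf_det_esymmMatrix_X_le {k : ℕ} (Z : Fin k → Finset ι) (l : ι) :
    (esymmMatrix k Z (X : ι → MvPolynomial ι R)).det.degreeOf l ≤ k - 1 := by
  refine degreeOf_det_le fun σ => ?_
  calc ∑ i, (esymmMatrix k Z (X : ι → MvPolynomial ι R) i (σ i)).degreeOf l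
      ≤ ∑ i, min (σ i : ℕ) 1 := Finset.sum_le_sum fun i _ => degreeOf_esymm_X_le (Z i) (σ i) l
    _ = ∑ r : Fin k, min (r : ℕ) 1 := Equiv.sum_comp σ fun r : Fin k => min (r : ℕ) 1
    _ = k - 1 := by cases k <;> simp [Fin.sum_univ_succ]

theorem degreeOf_det_vandermonde_X_le_s6 {n : ℕ} (l : Fin n) :
    (vandermonde (X : Fin n → MvPolynomial (Fin n) R)).det.degreeOf l ≤ n - 1 := by
  refine degreeOf_det_le fun σ => ?_
  rw [Finset.sum_eq_single_of_mem l (Finset.mem_univ l)]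
  · rw [vandermonde_apply, degreeOf_X_self_pow]
    exact Nat.le_sub_one_of_lt (σ l).isLt
  · intro i _ hne
    rw [vandermonde_apply, degreeOf_X_pow_of_ne _ hne.symm]

end Degree

theorem exists_injective_det_esymmMatrix_ne_zero {R : Type*} [CommRing R] [IsDomain R] {n k : ℕ}
    {Z : Fin k → Finset (Fin n)}
    (hdet : (esymmMatrix k Z (X : Fin n → MvPolynomial (Fin n) R)).det ≠ 0)
    {A : Finset R} (hA : n + (k - 1) ≤ A.card) :
    ∃ x : Fin n → R, Function.Injective x ∧ (esymmMatrix k Z x).det ≠ 0 := by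
  let P : MvPolynomial (Fin n) R := (esymmMatrix k Z X).det * (vandermonde X).det
  have hP : P ≠ 0 := mul_ne_zero hdet (det_vandermonde_ne_zero_iff.2 X_injective)
  have hdeg (l : Fin n) : P.degreeOf l < A.card := by
    calc P.degreeOf l ≤ (k - 1) + (n - 1) := (degreeOf_mul_le _ _ _).trans
          (add_le_add (degreeOf_det_esymmMatrix_X_le Z l) (degreeOf_det_vandermonde_X_le_s6 l))
      _ < A.card := by have := l.isLt; omega
  obtain ⟨x, hx⟩ : ∃ x : Fin n → R, eval x P ≠ 0 := by
    by_contra! hzero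
    exact hP (eq_zero_of_eval_zero_at_prod_finset P (fun _ => A) hdeg fun x _ => hzero x)
  have heval : eval x ∘ X = x := funext fun j => eval_X j
  have hPx : eval x P = (esymmMatrix k Z x).det * (vandermonde x).det := by
    rw [map_mul, RingHom.map_det, RingHom.map_det, RingHom.mapMatrix_apply, map_esymmMatrix, heval]
    congr 2
    ext i r
    simp [vandermonde_apply]
  rw [hPx] at hx
  exact ⟨x, det_vandermonde_ne_zero_iff.1 (right_ne_zero_of_mul hx), left_ne_zero_of_mul hx⟩

theorem mds_code_of_unique_multiset_general {R : Type*} [CommRing R] [IsDomain R] {n k : ℕ}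
    {Z : Fin k → Finset (Fin n)} (hZ : ∀ i, (Z i).card < k)
    (huniq : ∃ (σ : Equiv.Perm (Fin k)) (S : Fin k → Finset (Fin n)),
      IsChoice n k Z σ S ∧
      ∀ (σ' : Equiv.Perm (Fin k)) (S' : Fin k → Finset (Fin n)),
        IsChoice n k Z σ' S' → choiceValue n k S' = choiceValue n k S →
          σ' = σ ∧ S' = S)
    {A : Finset R} (hA : n + (k - 1) ≤ A.card) :
    ∃ G : Matrix (Fin k) (Fin n) R,
      (∀ i, ∀ j ∈ Z i, G i j = 0) ∧
      ∀ s : Finset (Fin n), s.card = k → LinearIndependent R fun j : s => G.col j := by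
  obtain ⟨σ, S, hS, hSuniq⟩ := huniq
  obtain ⟨x, hx, hdet⟩ :=
    exists_injective_det_esymmMatrix_ne_zero (det_esymmMatrix_X_ne_zero hS hSuniq) hA
  exact exists_mds_matrix_of_det_esymmMatrix_ne_zero hZ hx hdet

/-- If the `(k-1)`-subsets `Z i` satisfy `|⋂_{i ∈ I} Z i| ≤ k - |I|` for all nonempty `I`
and some choice has a unique value, then over every finite field with at least `n + k - 1`
elements there is a `k × n` MDS generator matrix vanishing on the prescribed positions. -/
theorem mds_code_of_unique_multiset (n k : ℕ) (hk : 1 ≤ k) (hkn : k ≤ n)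
    (Z : Fin k → Finset (Fin n)) (hZ : ∀ i, (Z i).card = k - 1)
    (hint : ∀ I : Finset (Fin k), I.Nonempty → (I.inf Z).card ≤ k - I.card)
    (huniq : ∃ (σ : Equiv.Perm (Fin k)) (S : Fin k → Finset (Fin n)),
      IsChoice n k Z σ S ∧
      ∀ (σ' : Equiv.Perm (Fin k)) (S' : Fin k → Finset (Fin n)),
        IsChoice n k Z σ' S' → choiceValue n k S' = choiceValue n k S →
          σ' = σ ∧ S' = S)
    (F : Type*) [Field F] [Fintype F] (hq : n + k - 1 ≤ Fintype.card F) :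
    ∃ G : Matrix (Fin k) (Fin n) F,
      (∀ i j, j ∈ Z i → G i j = 0) ∧
      (∀ s : Finset (Fin n), s.card = k →
        LinearIndependent F (fun j : s => (fun i : Fin k => G i (j : Fin n)))) := by
  have hcard (i : Fin k) : (Z i).card < k := by rw [hZ]; omega
  exact mds_code_of_unique_multiset_general hcard huniq (A := Finset.univ)
    (by rw [Finset.card_univ]; omega)
end

section
/- Let 1 ≤ k ≤ n and let Z_1,…,Z_k be (k−1)-element subsets of {1,…,n} satisfying |⋂_{i∈I} Z_i| ≤ k − |I| for every nonempty subset I ⊆ {1,…,k}, and additionally satisfying |Z_i ∩ Z_{i′}| ≤ 1 for all i ≠ i′. Then there exists a choice (σ, (S_1,…,S_k)) whose value is unique among all choices: every choice (σ′, (S′_1,…,S′_k)) whose value equals the multiset S_1 ⊎ ⋯ ⊎ S_k satisfies σ′ = σ and S′_i = S_i for all i. -/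
section

open Finset

variable {ι α : Type*}

/-! ### Choices on a finite set of indices -/

/-- A choice for the family `Z` on the index set `U`: subsets `S i ⊆ Z i` of pairwise distinct
cardinalities. When every `Z i` has `#U - 1` elements, the cardinalities are exactly
`0, …, #U - 1`, so the permutation need not be carried along. -/
def IsChoiceOn (U : Finset ι) (Z S : ι → Finset α) : Prop :=
  (∀ i ∈ U, S i ⊆ Z i) ∧ Set.InjOn (fun i => #(S i)) U

/-- The value of the family `S` on the index set `U`, that is, the multiset union of its members. -/
def valueOn (U : Finset ι) (S : ι → Finset α) : Multiset α :=
  ∑ i ∈ U, (S i).val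

/-- A choice for `Z` on `U` which is determined on `U` by its value. -/
def IsUniqueChoiceOn (U : Finset ι) (Z S : ι → Finset α) : Prop :=
  IsChoiceOn U Z S ∧ ∀ S', IsChoiceOn U Z S' → valueOn U S' = valueOn U S → ∀ i ∈ U, S' i = S i

theorem count_valueOn [DecidableEq α] (U : Finset ι) (S : ι → Finset α) (x : α) :
    (valueOn U S).count x = #{i ∈ U | x ∈ S i} := by
  simp only [valueOn, Multiset.count_sum', card_filter, Multiset.count_eq_of_nodup (S _).nodup,
    mem_val]

theorem mem_of_valueOn_eq {U : Finset ι} {S S' : ι → Finset α} {x : α}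
    (hval : valueOn U S' = valueOn U S) (hx : ∀ i ∈ U, x ∈ S' i → x ∈ S i)
    {i : ι} (hi : i ∈ U) (hxi : x ∈ S i) : x ∈ S' i := by
  classical
  have hcard : #{i ∈ U | x ∈ S i} ≤ #{i ∈ U | x ∈ S' i} := by
    rw [← count_valueOn, ← count_valueOn, hval]
  have hsub : {i ∈ U | x ∈ S' i} ⊆ {i ∈ U | x ∈ S i} := fun j hj =>
    mem_filter.2 ⟨(mem_filter.1 hj).1, hx j (mem_filter.1 hj).1 (mem_filter.1 hj).2⟩
  have hmem : i ∈ {i ∈ U | x ∈ S' i} := by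
    rw [eq_of_subset_of_card_le hsub hcard]
    exact mem_filter.2 ⟨hi, hxi⟩
  exact (mem_filter.1 hmem).2

theorem notMem_of_valueOn_eq {U : Finset ι} {S S' : ι → Finset α} {x : α}
    (hval : valueOn U S' = valueOn U S) (hx : ∀ i ∈ U, x ∉ S i) {i : ι} (hi : i ∈ U) :
    x ∉ S' i :=
  fun hxi => hx i hi (mem_of_valueOn_eq hval.symm (fun j hj hxj => absurd hxj (hx j hj)) hi hxi)

theorem valueOn_eq_add [DecidableEq ι] [DecidableEq α] {U V : Finset ι} (hVU : V ⊆ U)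
    (S : ι → Finset α) (T : Finset α) :
    valueOn U S = valueOn (U \ V) S + valueOn V (fun i => S i ∩ T) +
      valueOn V (fun i => S i \ T) := by
  have hsplit (i : ι) : (S i).val = (S i ∩ T).val + (S i \ T).val := by
    rw [← disjUnion_val _ _ (disjoint_sdiff_inter _ _).symm, disjUnion_eq_union, union_comm,
      sdiff_union_inter]
  rw [valueOn, ← sum_sdiff hVU, sum_congr (s₁ := V) rfl fun i _ => hsplit i, sum_add_distrib,
    add_assoc]
  rfl

theorem IsChoiceOn.exists_card_eq {U : Finset ι} {Z S : ι → Finset α} (hS : IsChoiceOn U Z S)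
    (hcard : ∀ i ∈ U, #(Z i) + 1 = #U) {m : ℕ} (hm : m < #U) : ∃ i ∈ U, #(S i) = m := by
  have hmaps : Set.MapsTo (fun i => #(S i)) U (range #U) := fun i hi =>
    mem_coe.2 (mem_range.2 ((Nat.lt_succ_of_le (card_le_card (hS.1 i hi))).trans_eq (hcard i hi)))
  exact surjOn_of_injOn_of_card_le _ hmaps hS.2 (card_range _).le (mem_coe.2 (mem_range.2 hm))

theorem IsChoiceOn.exists_eq_empty {U : Finset ι} {Z S : ι → Finset α} (hS : IsChoiceOn U Z S)
    (hcard : ∀ i ∈ U, #(Z i) + 1 = #U) (hU : U.Nonempty) : ∃ i ∈ U, S i = ∅ := by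
  simpa only [card_eq_zero] using hS.exists_card_eq hcard hU.card_pos

theorem IsChoiceOn.exists_eq_full {U : Finset ι} {Z S : ι → Finset α} (hS : IsChoiceOn U Z S)
    (hcard : ∀ i ∈ U, #(Z i) + 1 = #U) (hU : U.Nonempty) : ∃ i ∈ U, S i = Z i := by
  obtain ⟨i, hi, hSi⟩ := hS.exists_card_eq hcard (Nat.sub_one_lt hU.card_ne_zero)
  refine ⟨i, hi, eq_of_subset_of_card_le (hS.1 i hi) ?_⟩
  rw [hSi, ← hcard i hi, Nat.add_sub_cancel]

theorem IsChoiceOn.update [DecidableEq ι] {U : Finset ι} {Z S : ι → Finset α} {A : ι}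
    {X : Finset α} (hS : IsChoiceOn (U.erase A) Z S) (hX : X ⊆ Z A)
    (hcard : ∀ i ∈ U.erase A, #(S i) ≠ #X) : IsChoiceOn U Z (Function.update S A X) := by
  have hne {i : ι} (hi : i ∈ U.erase A) : Function.update S A X i = S i :=
    Function.update_of_ne (ne_of_mem_erase hi) _ _
  refine ⟨fun i hi => ?_, fun i hi j hj hij => ?_⟩
  · by_cases hiA : i = A
    · subst hiA
      rwa [Function.update_self]
    · have hi' := mem_erase.2 ⟨hiA, hi⟩
      exact hne hi' ▸ hS.1 i hi'
  · by_cases hiA : i = A <;> by_cases hjA : j = A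
    · exact hiA.trans hjA.symm
    · have hj' := mem_erase.2 ⟨hjA, hj⟩
      simp only [hiA, Function.update_self, hne hj'] at hij
      exact absurd hij.symm (hcard j hj')
    · have hi' := mem_erase.2 ⟨hiA, hi⟩
      simp only [hjA, Function.update_self, hne hi'] at hij
      exact absurd hij (hcard i hi')
    · have hi' := mem_erase.2 ⟨hiA, hi⟩
      have hj' := mem_erase.2 ⟨hjA, hj⟩
      simp only [hne hi', hne hj'] at hij
      exact hS.2 hi' hj' hij

/-- Only the parts outside `T` are left to the smaller family `Z'`. Since the parts inside `T` all
have `c` elements, removing them keeps the cardinalities distinct. -/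
theorem IsUniqueChoiceOn.extend [DecidableEq ι] [DecidableEq α] {U V : Finset ι}
    {Z Z' S R : ι → Finset α} {T : Finset α} {c : ℕ} (hR : IsUniqueChoiceOn V Z' R)
    (hVU : V ⊆ U) (hS : IsChoiceOn U Z S) (hSR : ∀ i ∈ V, S i \ T = R i)
    (hcard : ∀ i ∈ V, #(S i ∩ T) = c)
    (hforced : ∀ S', IsChoiceOn U Z S' → valueOn U S' = valueOn U S →
      (∀ i ∈ U \ V, S' i = S i) ∧ ∀ i ∈ V, S' i ∩ T = S i ∩ T ∧ S' i \ T ⊆ Z' i) :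
    IsUniqueChoiceOn U Z S := by
  refine ⟨hS, fun S' hS' hval i hi => ?_⟩
  obtain ⟨hout, hin⟩ := hforced S' hS' hval
  have hchoice : IsChoiceOn V Z' (fun i => S' i \ T) := by
    refine ⟨fun i hi => (hin i hi).2, fun i hi j hj hij => hS'.2 (hVU hi) (hVU hj) ?_⟩
    have hcard' (l : ι) (hl : l ∈ V) : #(S' l ∩ T) = c := (hin l hl).1 ▸ hcard l hl
    simp only [← card_inter_add_card_sdiff (S' _) T, hcard' i hi, hcard' j hj]
    exact congrArg (c + ·) hij
  have hval' : valueOn V (fun i => S' i \ T) = valueOn V R := by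
    have hout' : valueOn (U \ V) S' = valueOn (U \ V) S :=
      sum_congr rfl fun i hi => congrArg val (hout i hi)
    have hin' : valueOn V (fun i => S' i ∩ T) = valueOn V (fun i => S i ∩ T) :=
      sum_congr rfl fun i hi => congrArg val (hin i hi).1
    have hR' : valueOn V (fun i => S i \ T) = valueOn V R :=
      sum_congr rfl fun i hi => congrArg val (hSR i hi)
    rw [valueOn_eq_add hVU S' T, valueOn_eq_add hVU S T, hout', hin', hR'] at hval
    exact add_left_cancel hval
  by_cases hiV : i ∈ V
  · rw [← sdiff_union_inter (S' i) T, ← sdiff_union_inter (S i) T, (hin i hiV).1, hSR i hiV,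
      hR.2 _ hchoice hval' i hiV]
  · exact hout i (mem_sdiff.2 ⟨hi, hiV⟩)

/-! ### Linear families -/

/-- A linear family on `U`, in the sense of linear hypergraphs: any two members share at most one
element. -/
def IsLinearOn [DecidableEq α] (U : Finset ι) (Z : ι → Finset α) : Prop :=
  (U : Set ι).Pairwise fun i j => #(Z i ∩ Z j) ≤ 1

theorem IsLinearOn.eq_of_mem [DecidableEq α] {U : Finset ι} {Z : ι → Finset α}
    (hlin : IsLinearOn U Z) {i j : ι} (hi : i ∈ U) (hj : j ∈ U) (hij : i ≠ j) {x y : α}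
    (hxi : x ∈ Z i) (hxj : x ∈ Z j) (hyi : y ∈ Z i) (hyj : y ∈ Z j) : x = y :=
  card_le_one.1 (hlin hi hj hij) x (mem_inter.2 ⟨hxi, hxj⟩) y (mem_inter.2 ⟨hyi, hyj⟩)

theorem IsLinearOn.sdiff [DecidableEq α] {U V : Finset ι} {Z : ι → Finset α}
    (hlin : IsLinearOn U Z) (hVU : V ⊆ U) (D : Finset α) : IsLinearOn V (fun i => Z i \ D) :=
  fun _ hi _ hj hij => (card_le_card (inter_subset_inter sdiff_subset sdiff_subset)).trans
    (hlin (hVU hi) (hVU hj) hij)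

/-- `Z i` has a private element: one which lies in no other member of the family on `U`. -/
def HasPrivate (U : Finset ι) (Z : ι → Finset α) (i : ι) : Prop :=
  ∃ x ∈ Z i, ∀ j ∈ U, x ∈ Z j → j = i

/-- If `Z i` has no private element, its `#U - 1` elements are matched with the `#U - 1` other
indices, so that each of them lies in exactly one other member. -/
theorem IsLinearOn.exists_mem_inter_of_not_hasPrivate [DecidableEq α]
    {U : Finset ι} {Z : ι → Finset α} (hlin : IsLinearOn U Z) {i j : ι} (hi : i ∈ U) (hj : j ∈ U)
    (hij : i ≠ j) (hcard : #(Z i) + 1 = #U) (hpriv : ¬ HasPrivate U Z i) :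
    ∃ x ∈ Z i, x ∈ Z j ∧ ∀ l ∈ U, x ∈ Z l → l = i ∨ l = j := by
  classical
  simp only [HasPrivate, not_exists, not_and, not_forall] at hpriv
  have : Nonempty ι := ⟨i⟩
  choose! f hfU hf hfi using hpriv
  have hmaps : Set.MapsTo f (Z i) (U.erase i) := fun x hx => mem_erase.2 ⟨hfi x hx, hfU x hx⟩
  have hinj : Set.InjOn f (Z i) := fun x hx y hy hxy =>
    hlin.eq_of_mem hi (hfU x hx) (Ne.symm (hfi x hx)) hx (hf x hx) hy (hxy ▸ hf y hy)
  have hsurj : Set.SurjOn f (Z i) (U.erase i) :=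
    surjOn_of_injOn_of_card_le f hmaps hinj (by rw [card_erase_of_mem hi]; omega)
  obtain ⟨x, hx, rfl⟩ := hsurj (mem_erase.2 ⟨hij.symm, hj⟩)
  refine ⟨x, hx, hf x hx, fun l hl hxl => or_iff_not_imp_left.2 fun hli => ?_⟩
  obtain ⟨y, hy, rfl⟩ := hsurj (mem_erase.2 ⟨hli, hl⟩)
  rw [hlin.eq_of_mem hi hl (Ne.symm hli) hy (hf y hy) hx hxl]

/-! ### Exact hitting sets -/

/-- Among the indices of `U`, the set `D` meets exactly the `Z i` with `i ∈ s`, and those in a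
single element each. Such a `D` supplies the elements to be dropped in the induction. -/
def ExactlyHits [DecidableEq ι] [DecidableEq α] (U : Finset ι) (Z : ι → Finset α) (s : Finset ι)
    (D : Finset α) : Prop :=
  (∀ i ∈ s, #(Z i ∩ D) = 1) ∧ ∀ i ∈ U \ s, Disjoint (Z i) D

section ExactlyHits

variable [DecidableEq ι] [DecidableEq α] {U s t : Finset ι} {Z : ι → Finset α} {D E : Finset α}

theorem ExactlyHits.singleton {x : α} (hsU : s ⊆ U) (hx : ∀ i ∈ U, x ∈ Z i ↔ i ∈ s) :
    ExactlyHits U Z s {x} := by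
  refine ⟨fun i hi => ?_, fun i hi => ?_⟩
  · rw [inter_singleton_of_mem ((hx i (hsU hi)).2 hi), card_singleton]
  · obtain ⟨hiU, his⟩ := mem_sdiff.1 hi
    exact disjoint_singleton_right.2 fun hxi => his ((hx i hiU).1 hxi)

theorem ExactlyHits.union (hD : ExactlyHits U Z s D) (hE : ExactlyHits U Z t E) (hsU : s ⊆ U)
    (htU : t ⊆ U) (hst : Disjoint s t) : ExactlyHits U Z (s ∪ t) (D ∪ E) := by
  refine ⟨fun i hi => ?_, fun i hi => ?_⟩
  · rw [inter_union_distrib_left]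
    rcases mem_union.1 hi with his | hit
    · rw [disjoint_iff_inter_eq_empty.1
        (hE.2 i (mem_sdiff.2 ⟨hsU his, disjoint_left.1 hst his⟩)), union_empty, hD.1 i his]
    · rw [disjoint_iff_inter_eq_empty.1
        (hD.2 i (mem_sdiff.2 ⟨htU hit, disjoint_right.1 hst hit⟩)), empty_union, hE.1 i hit]
  · obtain ⟨hiU, hi⟩ := mem_sdiff.1 hi
    rw [notMem_union] at hi
    exact disjoint_union_right.2
      ⟨hD.2 i (mem_sdiff.2 ⟨hiU, hi.1⟩), hE.2 i (mem_sdiff.2 ⟨hiU, hi.2⟩)⟩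

theorem HasPrivate.exists_exactlyHits {i : ι} (hi : i ∈ U) (h : HasPrivate U Z i) :
    ∃ D, ExactlyHits U Z {i} D := by
  obtain ⟨x, hx, hpriv⟩ := h
  refine ⟨{x}, .singleton (singleton_subset_iff.2 hi) fun j hj => ?_⟩
  rw [mem_singleton]
  exact ⟨hpriv j hj, fun hji => hji ▸ hx⟩

theorem IsLinearOn.exists_exactlyHits_pair (hlin : IsLinearOn U Z)
    (hcard : ∀ i ∈ U, #(Z i) + 1 = #U) {i j : ι} (hi : i ∈ U) (hj : j ∈ U) (hij : i ≠ j) :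
    ∃ D, ExactlyHits U Z {i, j} D := by
  wlog hpriv : ¬ HasPrivate U Z i ∨ HasPrivate U Z j generalizing i j
  · rw [pair_comm]
    exact this hj hi hij.symm (by tauto)
  have hsub : {i, j} ⊆ U := insert_subset hi (singleton_subset_iff.2 hj)
  by_cases hpi : HasPrivate U Z i
  · obtain ⟨D, hD⟩ := hpi.exists_exactlyHits hi
    obtain ⟨E, hE⟩ := (hpriv.resolve_left (not_not.2 hpi)).exists_exactlyHits hj
    exact ⟨D ∪ E, hD.union hE (singleton_subset_iff.2 hi) (singleton_subset_iff.2 hj)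
      (disjoint_singleton.2 hij)⟩
  · obtain ⟨x, hxi, hxj, hx⟩ :=
      hlin.exists_mem_inter_of_not_hasPrivate hi hj hij (hcard i hi) hpi
    refine ⟨{x}, .singleton hsub fun l hl => ?_⟩
    rw [mem_insert, mem_singleton]
    exact ⟨hx l hl, by rintro (rfl | rfl) <;> assumption⟩

theorem IsLinearOn.exists_exactlyHits_of_even (hlin : IsLinearOn U Z)
    (hcard : ∀ i ∈ U, #(Z i) + 1 = #U) (hsU : s ⊆ U) (heven : Even #s) :
    ∃ D, ExactlyHits U Z s D := by
  induction s using Finset.strongInduction with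
  | H s ih =>
  rcases s.eq_empty_or_nonempty with rfl | hne
  · exact ⟨∅, by simp [ExactlyHits]⟩
  have hone : 1 < #s := by
    have := hne.card_pos
    obtain ⟨m, hm⟩ := heven
    omega
  obtain ⟨i, hi, j, hj, hij⟩ := one_lt_card.1 hone
  have hpair : {i, j} ⊆ s := insert_subset hi (singleton_subset_iff.2 hj)
  have heven' : Even #(s \ {i, j}) := by
    rw [card_sdiff_of_subset hpair, card_pair hij]
    exact heven.tsub even_two
  obtain ⟨D, hD⟩ := ih (s \ {i, j}) (sdiff_ssubset hpair (insert_nonempty _ _))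
    (sdiff_subset.trans hsU) heven'
  obtain ⟨E, hE⟩ := hlin.exists_exactlyHits_pair hcard (hsU hi) (hsU hj) hij
  have hunion := hD.union hE (sdiff_subset.trans hsU) (hpair.trans hsU) sdiff_disjoint
  rw [sdiff_union_of_subset hpair] at hunion
  exact ⟨D ∪ E, hunion⟩

theorem IsLinearOn.exists_exactlyHits_erase (hlin : IsLinearOn U Z)
    (hcard : ∀ i ∈ U, #(Z i) + 1 = #U) (hU : U.Nonempty)
    (h : Odd #U ∨ ∃ i ∈ U, HasPrivate U Z i) :
    ∃ A ∈ U, ∃ D, ExactlyHits U Z (U.erase A) D := by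
  rcases Nat.even_or_odd #U with heven | hodd
  · obtain ⟨i, hi, hpriv⟩ := h.resolve_left (Nat.not_odd_iff_even.2 heven)
    have hne : (U.erase i).Nonempty := by
      rw [← card_pos, card_erase_of_mem hi]
      have := card_pos.2 hU
      obtain ⟨m, hm⟩ := heven
      omega
    obtain ⟨A, hA⟩ := hne
    obtain ⟨hAi, hAU⟩ := mem_erase.1 hA
    have hsub : (U.erase A).erase i ⊆ U := (erase_subset _ _).trans (erase_subset _ _)
    have hi' : i ∈ U.erase A := mem_erase.2 ⟨hAi.symm, hi⟩
    obtain ⟨D, hD⟩ := hlin.exists_exactlyHits_of_even hcard hsub (by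
      rw [card_erase_of_mem hi', card_erase_of_mem hAU]
      exact heven.tsub even_two)
    obtain ⟨E, hE⟩ := hpriv.exists_exactlyHits hi
    have hunion := hE.union hD (singleton_subset_iff.2 hi) hsub
      (disjoint_singleton_left.2 (notMem_erase _ _))
    rw [← insert_eq, insert_erase hi'] at hunion
    exact ⟨A, hAU, E ∪ D, hunion⟩
  · obtain ⟨A, hA⟩ := hU
    obtain ⟨D, hD⟩ := hlin.exists_exactlyHits_of_even hcard (erase_subset A U)
      (by rw [card_erase_of_mem hA]; exact hodd.tsub_odd odd_one)
    exact ⟨A, hA, D, hD⟩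

theorem ExactlyHits.card_sdiff_add_one (hD : ExactlyHits U Z s D) {i : ι} (hi : i ∈ s) :
    #(Z i \ D) + 1 = #(Z i) := by
  rw [← hD.1 i hi, card_sdiff_add_card_inter]

theorem ExactlyHits.card_sdiff_union_add_two {T : Finset α} {i : ι}
    (hD : ExactlyHits U Z s D) (hi : i ∈ s) (hT : #(Z i ∩ T) = 1) (hTD : Disjoint T D) :
    #(Z i \ (T ∪ D)) + 2 = #(Z i) := by
  have hunion : #(Z i ∩ (T ∪ D)) = 2 := by
    rw [inter_union_distrib_left, card_union_of_disjoint
      (hTD.mono inter_subset_right inter_subset_right), hT, hD.1 i hi]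
  rw [← hunion, card_sdiff_add_card_inter]

theorem ExactlyHits.disjoint_of_erase {A : ι} (hD : ExactlyHits U Z (U.erase A) D) (hA : A ∈ U) :
    Disjoint (Z A) D :=
  hD.2 A (mem_sdiff.2 ⟨hA, notMem_erase A U⟩)

end ExactlyHits

/-! ### Removing indices -/

section Removal

variable [DecidableEq ι] [DecidableEq α] {U : Finset ι} {Z R : ι → Finset α} {A B : ι}
  {D : Finset α}

/-- As `D` is not used at all, no index other than `A` can be given its whole set. -/
theorem IsUniqueChoiceOn.update_full
    (hR : IsUniqueChoiceOn (U.erase A) (fun i => Z i \ D) R) (hA : A ∈ U)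
    (hcard : ∀ i ∈ U, #(Z i) + 1 = #U) (hD : ExactlyHits U Z (U.erase A) D) :
    IsUniqueChoiceOn U Z (Function.update R A (Z A)) := by
  have hS : IsChoiceOn U Z (Function.update R A (Z A)) := by
    refine .update ⟨fun i hi => (hR.1.1 i hi).trans sdiff_subset, hR.1.2⟩ subset_rfl
      fun i hi => ?_
    have hRi : #(R i) ≤ #(Z i \ D) := card_le_card (hR.1.1 i hi)
    have := hD.card_sdiff_add_one hi
    have := hcard i (mem_of_mem_erase hi)
    have := hcard A hA
    omega
  have hSR {i : ι} (hi : i ∈ U.erase A) : Function.update R A (Z A) i = R i :=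
    Function.update_of_ne (ne_of_mem_erase hi) _ _
  refine hR.extend (T := ∅) (c := 0) (erase_subset A U) hS (fun i hi => by rw [sdiff_empty, hSR hi])
    (fun i _ => by rw [inter_empty, card_empty]) fun S' hS' hval => ?_
  have hunused : ∀ x ∈ D, ∀ i ∈ U, x ∉ S' i := by
    refine fun x hx i hi => notMem_of_valueOn_eq hval (fun j hj => ?_) hi
    by_cases hjA : j = A
    · rw [hjA, Function.update_self]
      exact disjoint_right.1 (hD.disjoint_of_erase hA) hx
    · have hj' := mem_erase.2 ⟨hjA, hj⟩
      exact fun hxj => (mem_sdiff.1 (hR.1.1 j hj' (hSR hj' ▸ hxj))).2 hx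
  have hfull : S' A = Z A := by
    obtain ⟨i, hi, hiZ⟩ := hS'.exists_eq_full hcard ⟨A, hA⟩
    by_cases hiA : i = A
    · exact hiA ▸ hiZ
    · obtain ⟨x, hx⟩ := card_pos.1 ((hD.1 i (mem_erase.2 ⟨hiA, hi⟩)).symm ▸ one_pos)
      obtain ⟨hxi, hxD⟩ := mem_inter.1 hx
      exact absurd (hiZ ▸ hxi) (hunused x hxD i hi)
  refine ⟨fun i hi => ?_, fun i hi => ⟨by simp only [inter_empty], fun x hx => ?_⟩⟩
  · rw [sdiff_erase_self hA, mem_singleton] at hi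
    rw [hi, hfull, Function.update_self]
  · have hiU := mem_of_mem_erase hi
    rw [sdiff_empty] at hx
    exact mem_sdiff.2 ⟨hS'.1 i hiU hx, fun hxD => hunused x hxD i hiU hx⟩

theorem IsChoiceOn.update_full_update_empty
    (hR : IsChoiceOn ((U.erase B).erase A) (fun i => Z i \ (Z A ∪ D)) R)
    (hA : A ∈ U.erase B) (hcard : ∀ i ∈ U, #(Z i) + 1 = #U)
    (hone : ∀ i ∈ (U.erase B).erase A, #(Z i ∩ Z A) = 1) (hZA : (Z A).Nonempty)
    (hD : ExactlyHits U Z ((U.erase B).erase A) D) (hAD : Disjoint (Z A) D) :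
    IsChoiceOn U Z
      (Function.update (Function.update (fun i => R i ∪ (Z i ∩ Z A)) A (Z A)) B ∅) := by
  have hdisj (i : ι) (hi : i ∈ (U.erase B).erase A) : Disjoint (R i) (Z i ∩ Z A) :=
    disjoint_of_subset_left (hR.1 i hi)
      (disjoint_sdiff_self_left.mono_right (inter_subset_right.trans subset_union_left))
  have hcardR (i : ι) (hi : i ∈ (U.erase B).erase A) : #(R i ∪ (Z i ∩ Z A)) = #(R i) + 1 := by
    rw [card_union_of_disjoint (hdisj i hi), hone i hi]
  refine .update (.update ⟨fun i hi => ?_, fun i hi j hj hij => hR.2 hi hj ?_⟩ subset_rfl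
    fun i hi => ?_) (empty_subset _) fun i hi => ?_
  · exact union_subset ((hR.1 i hi).trans sdiff_subset) inter_subset_left
  · simp only [hcardR i hi, hcardR j hj] at hij
    exact Nat.succ.inj hij
  · have hRi : #(R i) ≤ #(Z i \ (Z A ∪ D)) := card_le_card (hR.1 i hi)
    have := hD.card_sdiff_union_add_two hi (hone i hi) hAD
    have := hcard i (mem_of_mem_erase (mem_of_mem_erase hi))
    have := hcard A (mem_of_mem_erase hA)
    have := hcardR i hi
    omega
  · rw [card_empty]
    by_cases hiA : i = A
    · rw [hiA, Function.update_self]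
      exact hZA.card_ne_zero
    · rw [Function.update_of_ne hiA, hcardR i (mem_erase.2 ⟨hiA, hi⟩)]
      exact Nat.succ_ne_zero _

/-- Elements of `Z A \ Z B` are used wherever possible, so only `B` can be given the empty set; then
all elements of `Z A` are used wherever possible, except at `B`. -/
theorem IsChoiceOn.eq_empty_and_inter_eq_of_valueOn_eq {S S' : ι → Finset α}
    (hS' : IsChoiceOn U Z S') (hval : valueOn U S' = valueOn U S) (hB : B ∈ U)
    (hcard : ∀ i ∈ U, #(Z i) + 1 = #U) (hnot : ∀ i ∈ U.erase B, ∃ x ∈ Z i, x ∈ Z A ∧ x ∉ Z B)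
    (hmem : ∀ i ∈ U.erase B, Z i ∩ Z A ⊆ S i) :
    S' B = ∅ ∧ ∀ i ∈ U.erase B, S' i ∩ Z A = Z i ∩ Z A := by
  have hused (x : α) (hx : x ∈ Z A) (hxB : x ∉ S' B) (i : ι) (hi : i ∈ U.erase B)
      (hxi : x ∈ Z i) : x ∈ S' i := by
    refine mem_of_valueOn_eq hval (fun j hj hxj => ?_) (mem_of_mem_erase hi)
      (hmem i hi (mem_inter.2 ⟨hxi, hx⟩))
    exact hmem j (mem_erase.2 ⟨fun h => hxB (h ▸ hxj), hj⟩) (mem_inter.2 ⟨hS'.1 j hj hxj, hx⟩)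
  have hempty : S' B = ∅ := by
    obtain ⟨i, hi, hiS⟩ := hS'.exists_eq_empty hcard ⟨B, hB⟩
    by_cases hiB : i = B
    · exact hiB ▸ hiS
    · have hi' := mem_erase.2 ⟨hiB, hi⟩
      obtain ⟨x, hxi, hxA, hxB⟩ := hnot i hi'
      exact absurd (hiS ▸ hused x hxA (fun h => hxB (hS'.1 B hB h)) i hi' hxi) (notMem_empty x)
  refine ⟨hempty, fun i hi => ?_⟩
  refine (inter_subset_inter_right (hS'.1 i (mem_of_mem_erase hi))).antisymm fun x hx => ?_
  obtain ⟨hxi, hxA⟩ := mem_inter.1 hx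
  exact mem_inter.2 ⟨hused x hxA (hempty ▸ notMem_empty x) i hi hxi, hxA⟩

theorem IsUniqueChoiceOn.of_eq_full_of_eq_empty {S : ι → Finset α}
    (hR : IsUniqueChoiceOn ((U.erase B).erase A) (fun i => Z i \ (Z A ∪ D)) R)
    (hS : IsChoiceOn U Z S) (hA : A ∈ U.erase B) (hB : B ∈ U)
    (hcard : ∀ i ∈ U, #(Z i) + 1 = #U) (hone : ∀ i ∈ (U.erase B).erase A, #(Z i ∩ Z A) = 1)
    (hnot : ∀ i ∈ U.erase B, ∃ x ∈ Z i, x ∈ Z A ∧ x ∉ Z B)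
    (hSA : S A = Z A) (hSB : S B = ∅)
    (hSR : ∀ i ∈ (U.erase B).erase A, S i \ Z A = R i)
    (hSZ : ∀ i ∈ (U.erase B).erase A, S i ∩ Z A = Z i ∩ Z A)
    (hSD : ∀ i ∈ U, Disjoint (S i) D) : IsUniqueChoiceOn U Z S := by
  have hVU : (U.erase B).erase A ⊆ U := (erase_subset _ _).trans (erase_subset _ _)
  have hmem (i : ι) (hi : i ∈ U.erase B) : Z i ∩ Z A ⊆ S i := by
    by_cases hiA : i = A
    · rw [hiA, inter_self, hSA]
    · exact hSZ i (mem_erase.2 ⟨hiA, hi⟩) ▸ inter_subset_left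
  refine hR.extend (c := 1) hVU hS hSR (fun i hi => by rw [hSZ i hi, hone i hi])
    fun S' hS' hval => ?_
  obtain ⟨hempty, hinter⟩ := hS'.eq_empty_and_inter_eq_of_valueOn_eq hval hB hcard hnot hmem
  refine ⟨fun i hi => ?_, fun i hi => ⟨?_, fun x hx => ?_⟩⟩
  · obtain ⟨hiU, hi⟩ := mem_sdiff.1 hi
    by_cases hiB : i = B
    · rw [hiB, hempty, hSB]
    · have hiA : i = A := by_contra fun hiA => hi (mem_erase.2 ⟨hiA, mem_erase.2 ⟨hiB, hiU⟩⟩)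
      rw [hiA, hSA, ← inter_eq_left.2 (hS'.1 A (mem_of_mem_erase hA)), hinter A hA, inter_self]
  · rw [hinter i (mem_of_mem_erase hi), hSZ i hi]
  · obtain ⟨hxS, hxA⟩ := mem_sdiff.1 hx
    refine mem_sdiff.2 ⟨hS'.1 i (hVU hi) hxS, notMem_union.2 ⟨hxA, fun hxD => ?_⟩⟩
    exact notMem_of_valueOn_eq hval (fun j hj => disjoint_right.1 (hSD j hj) hxD) (hVU hi) hxS

theorem IsUniqueChoiceOn.update_full_update_empty
    (hR : IsUniqueChoiceOn ((U.erase B).erase A) (fun i => Z i \ (Z A ∪ D)) R)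
    (hA : A ∈ U.erase B) (hB : B ∈ U) (hcard : ∀ i ∈ U, #(Z i) + 1 = #U)
    (hone : ∀ i ∈ (U.erase B).erase A, #(Z i ∩ Z A) = 1)
    (hnot : ∀ i ∈ U.erase B, ∃ x ∈ Z i, x ∈ Z A ∧ x ∉ Z B)
    (hD : ExactlyHits U Z ((U.erase B).erase A) D) :
    IsUniqueChoiceOn U Z
      (Function.update (Function.update (fun i => R i ∪ (Z i ∩ Z A)) A (Z A)) B ∅) := by
  have hAD : Disjoint (Z A) D :=
    hD.2 A (mem_sdiff.2 ⟨mem_of_mem_erase hA, notMem_erase A _⟩)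
  have hZA : (Z A).Nonempty := (hnot A hA).imp fun _ h => h.1
  have hS := hR.1.update_full_update_empty hA hcard hone hZA hD hAD
  have hSA :
      Function.update (Function.update (fun i => R i ∪ (Z i ∩ Z A)) A (Z A)) B ∅ A = Z A := by
    rw [Function.update_of_ne (ne_of_mem_erase hA), Function.update_self]
  have hSV (i : ι) (hi : i ∈ (U.erase B).erase A) :
      Function.update (Function.update (fun i => R i ∪ (Z i ∩ Z A)) A (Z A)) B ∅ i =
        R i ∪ (Z i ∩ Z A) := by
    rw [Function.update_of_ne (ne_of_mem_erase (mem_of_mem_erase hi)),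
      Function.update_of_ne (ne_of_mem_erase hi)]
  have hRdisj (i : ι) (hi : i ∈ (U.erase B).erase A) : Disjoint (R i) (Z A ∪ D) :=
    disjoint_of_subset_left (hR.1.1 i hi) disjoint_sdiff_self_left
  refine hR.of_eq_full_of_eq_empty hS hA hB hcard hone hnot hSA (Function.update_self ..)
    (fun i hi => ?_) (fun i hi => ?_) fun i hi => ?_
  · rw [hSV i hi, union_sdiff_distrib, sdiff_eq_empty_iff_subset.2 inter_subset_right, union_empty,
      sdiff_eq_self_of_disjoint ((hRdisj i hi).mono_right subset_union_left)]
  · rw [hSV i hi, union_inter_distrib_right, inter_assoc, inter_self,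
      disjoint_iff_inter_eq_empty.1 ((hRdisj i hi).mono_right subset_union_left), empty_union]
  · by_cases hiB : i = B
    · rw [hiB, Function.update_self]
      exact disjoint_empty_left D
    by_cases hiA : i = A
    · rwa [hiA, hSA]
    · have hi' := mem_erase.2 ⟨hiA, mem_erase.2 ⟨hiB, hi⟩⟩
      rw [hSV i hi', disjoint_union_left]
      exact ⟨(hRdisj i hi').mono_right subset_union_right, hAD.mono_left inter_subset_right⟩

/-- Once `A` is removed, `x` would be common to all remaining members, so it is dropped as well. -/
theorem IsLinearOn.exists_notMem_sdiff_singleton (hlin : IsLinearOn U Z)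
    (hcard : ∀ i ∈ U, #(Z i) + 1 = #U) {x : α} (hx : ∀ i ∈ U.erase A, x ∈ Z i) (hA : A ∈ U)
    (hne : (U.erase A).Nonempty) (y : α) : ∃ i ∈ U.erase A, y ∉ Z i \ {x} := by
  by_contra! hy
  obtain ⟨i, hi⟩ := hne
  have hpos : 1 < #(Z i) :=
    one_lt_card.2 ⟨x, hx i hi, y, (mem_sdiff.1 (hy i hi)).1, fun h =>
      (mem_sdiff.1 (hy i hi)).2 (mem_singleton.2 h.symm)⟩
  have hone : 1 < #(U.erase A) := by
    have := hcard i (mem_of_mem_erase hi)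
    rw [card_erase_of_mem hA]
    omega
  obtain ⟨j, hj, hji⟩ := exists_mem_ne hone i
  obtain ⟨hyi, hyx⟩ := mem_sdiff.1 (hy i hi)
  refine hyx (mem_singleton.2 ?_)
  exact hlin.eq_of_mem (mem_of_mem_erase hi) (mem_of_mem_erase hj) hji.symm hyi
    (mem_sdiff.1 (hy j hj)).1 (hx i hi) (hx j hj)

theorem IsLinearOn.exists_exactlyHits_erase_and_exists_notMem (hlin : IsLinearOn U Z)
    (hcard : ∀ i ∈ U, #(Z i) + 1 = #U) (hU : U.Nonempty) (hcommon : ∀ x, ∃ i ∈ U, x ∉ Z i)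
    (h : Odd #U ∨ ∃ i ∈ U, HasPrivate U Z i) :
    ∃ A ∈ U, ∃ D, ExactlyHits U Z (U.erase A) D ∧
      ((U.erase A).Nonempty → ∀ y, ∃ i ∈ U.erase A, y ∉ Z i \ D) := by
  by_cases hone : ∃ A ∈ U, ∃ x, ∀ i ∈ U.erase A, x ∈ Z i
  · obtain ⟨A, hA, x, hx⟩ := hone
    obtain ⟨i, hi, hxi⟩ := hcommon x
    have hiA : i = A := by_contra fun hiA => hxi (hx i (mem_erase.2 ⟨hiA, hi⟩))
    refine ⟨A, hA, {x}, .singleton (erase_subset A U) fun j hj => ⟨fun hxj => ?_, hx j⟩,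
      hlin.exists_notMem_sdiff_singleton hcard hx hA⟩
    exact mem_erase.2 ⟨fun hjA => hxi (hiA.trans hjA.symm ▸ hxj), hj⟩
  · push Not at hone
    obtain ⟨A, hA, D, hD⟩ := hlin.exists_exactlyHits_erase hcard hU h
    refine ⟨A, hA, D, hD, fun _ y => ?_⟩
    obtain ⟨i, hi, hyi⟩ := hone A hA y
    exact ⟨i, hi, fun hy => hyi (mem_sdiff.1 hy).1⟩

theorem IsLinearOn.exists_notMem_sdiff_of_not_hasPrivate (hlin : IsLinearOn U Z)
    (hpriv : ∀ i ∈ U, ¬ HasPrivate U Z i) {s : Finset ι} (hsU : s ⊆ U) (hD : ExactlyHits U Z s D)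
    (hne : s.Nonempty) (y : α) : ∃ i ∈ s, y ∉ Z i \ D := by
  by_contra! hy
  obtain ⟨i, hi⟩ := hne
  obtain ⟨x, hx⟩ := card_pos.1 ((hD.1 i hi).symm ▸ one_pos)
  obtain ⟨hxi, hxD⟩ := mem_inter.1 hx
  have hshared : ∃ j ∈ U, x ∈ Z j ∧ j ≠ i := by
    by_contra! h
    exact hpriv i (hsU hi) ⟨x, hxi, h⟩
  obtain ⟨j, hjU, hxj, hji⟩ := hshared
  have hj : j ∈ s := by_contra fun hj =>
    disjoint_left.1 (hD.2 j (mem_sdiff.2 ⟨hjU, hj⟩)) hxj hxD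
  obtain ⟨hyi, hyD⟩ := mem_sdiff.1 (hy i hi)
  have hyx := hlin.eq_of_mem (hsU hi) hjU hji.symm hyi (mem_sdiff.1 (hy j hj)).1 hxi hxj
  exact hyD (hyx ▸ hxD)

theorem IsLinearOn.exists_pair_of_not_hasPrivate (hlin : IsLinearOn U Z)
    (hcard : ∀ i ∈ U, #(Z i) + 1 = #U) (hU : 1 < #U) (hcommon : ∀ x, ∃ i ∈ U, x ∉ Z i)
    (hpriv : ∀ i ∈ U, ¬ HasPrivate U Z i) :
    ∃ B ∈ U, ∃ A ∈ U.erase B, (∀ i ∈ (U.erase B).erase A, #(Z i ∩ Z A) = 1) ∧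
      ∀ i ∈ U.erase B, ∃ x ∈ Z i, x ∈ Z A ∧ x ∉ Z B := by
  obtain ⟨A, hA⟩ := card_pos.1 (zero_lt_one.trans hU)
  have hZA : 0 < #(Z A) := by
    have := hcard A hA
    omega
  obtain ⟨x, hxA⟩ := card_pos.1 hZA
  obtain ⟨B, hB, hxB⟩ := hcommon x
  have hAB : A ≠ B := fun h => hxB (h ▸ hxA)
  have hshared (i : ι) (hi : i ∈ (U.erase B).erase A) :
      ∃ y ∈ Z i, y ∈ Z A ∧ y ∉ Z B := by
    obtain ⟨hiA, hi⟩ := mem_erase.1 hi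
    obtain ⟨hiB, hi⟩ := mem_erase.1 hi
    obtain ⟨y, hyi, hyA, hy⟩ :=
      hlin.exists_mem_inter_of_not_hasPrivate hi hA hiA (hcard i hi) (hpriv i hi)
    exact ⟨y, hyi, hyA, fun hyB => (hy B hB hyB).elim hiB.symm hAB.symm⟩
  refine ⟨B, hB, A, mem_erase.2 ⟨hAB, hA⟩, fun i hi => ?_, fun i hi => ?_⟩
  · obtain ⟨y, hyi, hyA, -⟩ := hshared i hi
    exact (hlin (mem_of_mem_erase (mem_of_mem_erase hi)) hA (ne_of_mem_erase hi)).antisymm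
      (card_pos.2 ⟨y, mem_inter.2 ⟨hyi, hyA⟩⟩)
  · by_cases hiA : i = A
    · exact ⟨x, hiA ▸ hxA, hxA, hxB⟩
    · exact hshared i (mem_erase.2 ⟨hiA, hi⟩)

end Removal

theorem IsLinearOn.exists_isUniqueChoiceOn [DecidableEq α] {U : Finset ι} {Z : ι → Finset α}
    (hlin : IsLinearOn U Z) (hcard : ∀ i ∈ U, #(Z i) + 1 = #U)
    (hcommon : U.Nonempty → ∀ x, ∃ i ∈ U, x ∉ Z i) : ∃ S, IsUniqueChoiceOn U Z S := by
  classical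
  induction U using Finset.strongInduction generalizing Z with
  | H U ih =>
  rcases U.eq_empty_or_nonempty with rfl | hU
  · exact ⟨fun _ => ∅, ⟨by simp, by simp⟩, by simp⟩
  by_cases h : Odd #U ∨ ∃ i ∈ U, HasPrivate U Z i
  · obtain ⟨A, hA, D, hD, hcommon'⟩ :=
      hlin.exists_exactlyHits_erase_and_exists_notMem hcard hU (hcommon hU) h
    obtain ⟨R, hR⟩ := ih _ (erase_ssubset hA) (hlin.sdiff (erase_subset A U) D) (fun i hi => by
      rw [hD.card_sdiff_add_one hi, card_erase_of_mem hA, ← hcard i (mem_of_mem_erase hi),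
        Nat.add_sub_cancel]) hcommon'
    exact ⟨_, hR.update_full hA hcard hD⟩
  · push Not at h
    obtain ⟨heven, hpriv⟩ := h
    rw [Nat.not_odd_iff_even] at heven
    have htwo : 1 < #U := by
      have := hU.card_pos
      obtain ⟨m, hm⟩ := heven
      omega
    obtain ⟨B, hB, A, hA, hone, hnot⟩ :=
      hlin.exists_pair_of_not_hasPrivate hcard htwo (hcommon hU) hpriv
    have hVU : (U.erase B).erase A ⊆ U := (erase_subset _ _).trans (erase_subset _ _)
    have hV : #((U.erase B).erase A) + 2 = #U := by
      rw [card_erase_of_mem hA, card_erase_of_mem hB]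
      omega
    obtain ⟨D, hD⟩ := hlin.exists_exactlyHits_of_even hcard hVU
      ((Nat.even_add.1 (hV ▸ heven)).2 even_two)
    have hAD : Disjoint (Z A) D := hD.2 A (mem_sdiff.2 ⟨mem_of_mem_erase hA, notMem_erase A _⟩)
    obtain ⟨R, hR⟩ := ih _ ((erase_subset A _).trans_ssubset (erase_ssubset hB))
      (hlin.sdiff hVU (Z A ∪ D)) (fun i hi => by
        have := hD.card_sdiff_union_add_two hi (hone i hi) hAD
        have := hcard i (hVU hi)
        omega) fun hne y => by
          obtain ⟨i, hi, hyi⟩ := hlin.exists_notMem_sdiff_of_not_hasPrivate hpriv hVU hD hne y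
          exact ⟨i, hi, fun hy => hyi (sdiff_subset_sdiff subset_rfl subset_union_right hy)⟩
    exact ⟨_, hR.update_full_update_empty hA hB hcard hone hnot hD⟩

/-! ### Choices with a permutation -/

theorem exists_notMem_of_inf_univ_eq_empty [Fintype ι] [Fintype α] [DecidableEq α]
    {Z : ι → Finset α} (hZ : univ.inf Z = ∅) (x : α) : ∃ i, x ∉ Z i := by
  by_contra! hx
  exact notMem_empty x (hZ ▸ mem_inf.2 fun i _ => hx i)

theorem unique_multiset_of_pairwise_inter_general [DecidableEq α] {k : ℕ} (Z : Fin k → Finset α)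
    (hZ : ∀ i, #(Z i) + 1 = k) (hcommon : ∀ x, ∃ i, x ∉ Z i)
    (hpair : ∀ i i', i ≠ i' → #(Z i ∩ Z i') ≤ 1) :
    ∃ (σ : Equiv.Perm (Fin k)) (S : Fin k → Finset α),
      (∀ i, S i ⊆ Z i ∧ #(S i) = σ i) ∧
      ∀ (σ' : Equiv.Perm (Fin k)) (S' : Fin k → Finset α),
        (∀ i, S' i ⊆ Z i ∧ #(S' i) = σ' i) → ∑ i, (S' i).val = ∑ i, (S i).val →
          σ' = σ ∧ S' = S := by
  obtain ⟨S, ⟨hSZ, hinj⟩, huniq⟩ := IsLinearOn.exists_isUniqueChoiceOn (U := univ) (Z := Z)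
    (fun i _ j _ hij => hpair i j hij) (fun i _ => by rw [hZ i, card_fin])
    (fun _ x => by simpa only [mem_univ, true_and] using hcommon x)
  have hlt (i : Fin k) : #(S i) < k :=
    (Nat.lt_succ_of_le (card_le_card (hSZ i (mem_univ i)))).trans_eq (hZ i)
  have hbij : Function.Bijective fun i => (⟨#(S i), hlt i⟩ : Fin k) :=
    Finite.injective_iff_bijective.1 fun i j hij =>
      hinj (mem_coe.2 (mem_univ i)) (mem_coe.2 (mem_univ j)) (Fin.ext_iff.1 hij)
  refine ⟨.ofBijective _ hbij, S, fun i => ⟨hSZ i (mem_univ i), rfl⟩, fun σ' S' hS' hval => ?_⟩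
  have hchoice : IsChoiceOn univ Z S' := by
    refine ⟨fun i _ => (hS' i).1, fun i _ j _ hij => σ'.injective (Fin.ext ?_)⟩
    rw [← (hS' i).2, ← (hS' j).2]
    exact hij
  have hSS : S' = S := funext fun i => huniq S' hchoice hval i (mem_univ i)
  exact ⟨Equiv.ext fun i => Fin.ext ((hS' i).2.symm.trans (by rw [hSS]; rfl)), hSS⟩

end

/-- The Unique-Multiset Conjecture holds when the sets `Z i` pairwise intersect in at
most one element. -/
theorem unique_multiset_of_pairwise_inter (n k : ℕ) (hk : 1 ≤ k) (hkn : k ≤ n)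
    (Z : Fin k → Finset (Fin n)) (hZ : ∀ i, (Z i).card = k - 1)
    (hint : ∀ I : Finset (Fin k), I.Nonempty → (I.inf Z).card ≤ k - I.card)
    (hpair : ∀ i i' : Fin k, i ≠ i' → (Z i ∩ Z i').card ≤ 1) :
    ∃ (σ : Equiv.Perm (Fin k)) (S : Fin k → Finset (Fin n)),
      IsChoice n k Z σ S ∧
      ∀ (σ' : Equiv.Perm (Fin k)) (S' : Fin k → Finset (Fin n)),
        IsChoice n k Z σ' S' → choiceValue n k S' = choiceValue n k S →
          σ' = σ ∧ S' = S := by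
  have hinter : Finset.univ.inf Z = ∅ := by simpa using hint Finset.univ ⟨⟨0, hk⟩, by simp⟩
  exact unique_multiset_of_pairwise_inter_general Z (fun i => by rw [hZ i, Nat.sub_add_cancel hk])
    (exists_notMem_of_inf_univ_eq_empty hinter) hpair
end

section
/- Let 1 ≤ k ≤ n and let Z_1,…,Z_k be (k−1)-element subsets of {1,…,n} such that |Z_i ∩ Z_{i′}| ≤ 1 for all i ≠ i′. Then the condition |⋂_{i∈I} Z_i| ≤ k − |I| for every nonempty subset I ⊆ {1,…,k} holds if and only if ⋂_{i=1}^{k} Z_i = ∅. -/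
/-!
At the full index set the bound `k - |I|` is `0`, so it says that the total intersection is empty.
At every other index set it is automatic: a singleton allows `k - 1` elements, and for
`2 ≤ |I| < k` the intersection lies in some `Z i ∩ Z j`, hence has at most `1 ≤ k - |I|` elements.
-/

section

open Finset

variable {ι α : Type*} [DecidableEq α] {Z : ι → Finset α} {I : Finset ι}

theorem card_inf'_le_of_pairwise_card_inter_le {c : ℕ} (hI : I.Nontrivial)
    (hpair : (I : Set ι).Pairwise fun i j ↦ #(Z i ∩ Z j) ≤ c) :
    #(I.inf' hI.nonempty Z) ≤ c := by
  obtain ⟨i, hi, j, hj, hij⟩ := hI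
  exact (card_le_card (subset_inter (inf'_le Z hi) (inf'_le Z hj))).trans (hpair hi hj hij)

theorem card_inf'_le_sub_card_of_card_lt {m : ℕ} (hI : I.Nonempty) (hIm : #I < m)
    (hZ : ∀ i ∈ I, #(Z i) ≤ m - 1)
    (hpair : (I : Set ι).Pairwise fun i j ↦ #(Z i ∩ Z j) ≤ 1) :
    #(I.inf' hI Z) ≤ m - #I := by
  obtain ⟨i, rfl⟩ | hI₂ := hI.exists_eq_singleton_or_nontrivial
  · simpa using hZ i
  · calc #(I.inf' hI Z) ≤ 1 := card_inf'_le_of_pairwise_card_inter_le hI₂ hpair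
      _ ≤ m - #I := Nat.sub_pos_of_lt hIm

theorem inter_cond_iff_total_inter_empty_general [Fintype ι] [Nonempty ι]
    (hZ : ∀ i, #(Z i) ≤ Fintype.card ι - 1) (hpair : Pairwise fun i j ↦ #(Z i ∩ Z j) ≤ 1) :
    (∀ (I : Finset ι) (hI : I.Nonempty), #(I.inf' hI Z) ≤ Fintype.card ι - #I) ↔
      univ.inf' univ_nonempty Z = ∅ := by
  constructor
  · intro h
    simpa using h univ univ_nonempty
  · intro hempty I hI
    obtain rfl | hne := eq_or_ne I univ
    · simp [hempty]
    · exact card_inf'_le_sub_card_of_card_lt hI (card_lt_iff_ne_univ I |>.mpr hne)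
        (fun i _ ↦ hZ i) (hpair.set_pairwise _)

end

/-- For `(k-1)`-subsets `Z 1, …, Z k` of `{1,…,n}` whose pairwise intersections have at
most one element, the condition `|⋂_{i ∈ I} Z i| ≤ k - |I|` for all nonempty `I` is
equivalent to `⋂_{i=1}^k Z i = ∅`. -/
theorem inter_cond_iff_total_inter_empty (n k : ℕ) (hk : 1 ≤ k) (hkn : k ≤ n)
    (Z : Fin k → Finset (Fin n)) (hZ : ∀ i, (Z i).card = k - 1)
    (hpair : ∀ i i' : Fin k, i ≠ i' → (Z i ∩ Z i').card ≤ 1) :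
    (∀ I : Finset (Fin k), I.Nonempty → (I.inf Z).card ≤ k - I.card) ↔
      Finset.univ.inf Z = ∅ := by
  have : Nonempty (Fin k) := ⟨⟨0, hk⟩⟩
  simpa [Finset.inf'_eq_inf] using
    inter_cond_iff_total_inter_empty_general (Z := Z) (by simp [hZ]) hpair
end

section
/- (The SMAN support matrix satisfies the MDS condition.) Let n, m ≥ 1, let A_1,…,A_m be subsets of {1,…,n}, let r_1,…,r_m be nonnegative integers, and let z be a nonnegative integer with 2z ≤ n. Suppose |⋃_{i∈I} A_i| ≥ ∑_{i∈I} r_i + 2z for every nonempty subset I ⊆ {1,…,m}. Set R = r_1 + ⋯ + r_m and k = n − 2z. Then R ≤ k; moreover, for any function g : {1,…,R} → {1,…,m} with |g^{−1}(s)| = r_s for every s, the family T_1,…,T_k of subsets of {1,…,n} defined by T_i = A_{g(i)} for 1 ≤ i ≤ R and T_i = {1,…,n} for R < i ≤ k satisfies the MDS condition: |⋃_{i∈I} T_i| ≥ n − k + |I| for every nonempty subset I ⊆ {1,…,k}. -/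
/-!
Splitting the rate of each source over several rows with the same support preserves the cut
condition: a set `J` of rows uses a set `S` of sources, its union is that of `S`, and its total
weight is at most the total rate of `S`. Full rows can be appended as long as the total weight fits
into `|α| - d`, because any union they enter is everything. With unit weights and `d = n - k` the
cut condition is the MDS condition.
-/

open Finset

section

variable {α ι ρ κ : Type*} [DecidableEq α]

/-- The cut-set bound of a simple multiple access network: a nonempty set `I` of sources, with rates
`r` and adjacent to the relays in `A i`, reaches at least `∑ i ∈ I, r i + d` relays. The redundancy
`d` is `2 * z` when `z` errors are to be tolerated. -/
def CutCondition (A : ι → Finset α) (r : ι → ℕ) (d : ℕ) : Prop :=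
  ∀ I : Finset ι, I.Nonempty → ∑ i ∈ I, r i + d ≤ #(I.biUnion A)

/-- The MDS condition on the supports `T` of the rows of a `k × n` generator matrix, with
`n = |α|` and `k = |κ|`: the cut condition with unit rates and redundancy `n - k`. The subtraction
is truncated, so the intended case is `k ≤ n`. -/
def MDSCondition [Fintype α] [Fintype κ] (T : κ → Finset α) : Prop :=
  CutCondition T 1 (Fintype.card α - Fintype.card κ)

namespace CutCondition

variable {A : ι → Finset α} {r : ι → ℕ} {d : ℕ}

theorem sum_add_le_card [Fintype α] (hA : CutCondition A r d) (hd : d ≤ Fintype.card α)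
    (I : Finset ι) : ∑ i ∈ I, r i + d ≤ Fintype.card α := by
  obtain rfl | hI := I.eq_empty_or_nonempty
  · simpa using hd
  · exact (hA I hI).trans (card_le_univ _)

theorem comp [Fintype ρ] [DecidableEq ι] (hA : CutCondition A r d) {g : ρ → ι} {w : ρ → ℕ}
    (hg : ∀ s, ∑ j with g j = s, w j ≤ r s) : CutCondition (A ∘ g) w d := by
  intro J hJ
  have hfiber (s : ι) : ∑ j ∈ J with g j = s, w j ≤ r s :=
    (sum_le_sum_of_subset (filter_subset_filter _ J.subset_univ)).trans (hg s)
  calc ∑ j ∈ J, w j + d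
      = ∑ s ∈ J.image g, ∑ j ∈ J with g j = s, w j + d := by
        rw [sum_fiberwise_of_maps_to fun _ => mem_image_of_mem g]
    _ ≤ ∑ s ∈ J.image g, r s + d := by gcongr with s; exact hfiber s
    _ ≤ #((J.image g).biUnion A) := hA _ (hJ.image g)
    _ = #(J.biUnion (A ∘ g)) := by rw [image_biUnion]; rfl

theorem of_comp_of_eq_univ [Fintype α] [Fintype κ] {e : ρ → κ} {T : κ → Finset α} {w : κ → ℕ}
    (h : CutCondition (T ∘ e) (w ∘ e) d) (hT : ∀ i ∉ Set.range e, T i = univ)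
    (hw : ∑ i, w i + d ≤ Fintype.card α) : CutCondition T w d := by
  classical
  intro I hI
  by_cases hIe : ∀ i ∈ I, i ∈ Set.range e
  · obtain ⟨J, -, hinj, rfl⟩ :=
      exists_subset_injOn_image_eq_of_surjOn (Set.univ : Set ρ) I (f := e)
        fun i hi => by simpa using hIe i hi
    rw [sum_image hinj, image_biUnion]
    exact h J hI.of_image
  · push Not at hIe
    obtain ⟨i, hiI, hi⟩ := hIe
    have hfull : I.biUnion T = univ :=
      univ_subset_iff.1 (hT i hi ▸ subset_biUnion_of_mem T hiI)
    calc ∑ i ∈ I, w i + d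
        ≤ ∑ i, w i + d := by gcongr; exact I.subset_univ
      _ ≤ Fintype.card α := hw
      _ = #(I.biUnion T) := by rw [hfull, card_univ]

end CutCondition

theorem sman_support_satisfies_mds_general [Fintype α] [Fintype ι] [DecidableEq ι] [Fintype ρ]
    [Fintype κ] {A : ι → Finset α} {r : ι → ℕ} {d : ℕ} (hA : CutCondition A r d)
    (hd : Fintype.card κ + d = Fintype.card α) :
    ∑ s, r s ≤ Fintype.card κ ∧
    ∀ g : ρ → ι, (∀ s, #{j | g j = s} ≤ r s) →
      ∀ (e : ρ → κ) (T : κ → Finset α), (∀ j, T (e j) = A (g j)) →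
        (∀ i ∉ Set.range e, T i = univ) → MDSCondition T := by
  have hrate : ∑ s, r s + d ≤ Fintype.card α := hA.sum_add_le_card (by omega) univ
  refine ⟨by omega, fun g hg e T hTA hT => ?_⟩
  have hTe : CutCondition (T ∘ e) 1 d := by
    rw [show T ∘ e = A ∘ g from funext hTA]
    exact hA.comp fun s => by simpa using hg s
  rw [MDSCondition, ← hd, Nat.add_sub_cancel_left]
  exact CutCondition.of_comp_of_eq_univ hTe hT (by simp [hd])

end

/-- The SMAN support matrix satisfies the MDS condition: with `R = ∑ r s`, `k = n - 2z`,
one has `R ≤ k`, and the family obtained by expanding each row `A s` into `r s` identical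
rows and appending `k - R` all-one rows satisfies the MDS condition. -/
theorem sman_support_satisfies_mds (n m : ℕ) (hn : 1 ≤ n) (hm : 1 ≤ m)
    (A : Fin m → Finset (Fin n)) (r : Fin m → ℕ) (z : ℕ) (hz : 2 * z ≤ n)
    (hcut : ∀ I : Finset (Fin m), I.Nonempty →
      (∑ i ∈ I, r i) + 2 * z ≤ (I.biUnion A).card)
    (R k : ℕ) (hR : R = ∑ s, r s) (hk : k = n - 2 * z) :
    R ≤ k ∧
    ∀ g : Fin R → Fin m,
      (∀ s : Fin m, (Finset.univ.filter fun j => g j = s).card = r s) →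
      ∀ T : Fin k → Finset (Fin n),
        (∀ (i : Fin k) (h : (i : ℕ) < R), T i = A (g ⟨i, h⟩)) →
        (∀ i : Fin k, R ≤ (i : ℕ) → T i = Finset.univ) →
        ∀ I : Finset (Fin k), I.Nonempty → n - k + I.card ≤ (I.biUnion T).card := by
  obtain ⟨hRk, hmds⟩ := sman_support_satisfies_mds_general (ρ := Fin R) (κ := Fin k)
    (A := A) (r := r) hcut (by simp only [Fintype.card_fin]; omega)
  rw [← hR, Fintype.card_fin] at hRk
  refine ⟨hRk, fun g hg T hTA hT I hI => ?_⟩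
  have hT' : MDSCondition T := hmds g (fun s => (hg s).le) (Fin.castLE hRk) T
    (fun j => hTA _ j.isLt) fun i hi => hT i (not_lt.1 fun h => hi ⟨⟨i, h⟩, rfl⟩)
  simpa [add_comm] using hT' I hI
end

section
/- (Reduction of the Unique-Multiset property to ground sets of size at most k(k−1).) Fix k ≥ 1. Suppose that for every n ≤ k(k−1) and every family Z_1,…,Z_k of (k−1)-element subsets of {1,…,n} satisfying |⋂_{i∈I} Z_i| ≤ k − |I| for all nonempty I ⊆ {1,…,k}, there exists a choice whose value is unique among all choices. Then for every n ≥ 1 and every family Z_1,…,Z_k of (k−1)-element subsets of {1,…,n} satisfying |⋂_{i∈I} Z_i| ≤ k − |I| for all nonempty I ⊆ {1,…,k}, there exists a choice whose value is unique among all choices. -/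
/-- There exists a choice for `Z` whose value is unique among all choices. -/
def HasUniqueChoice (n k : ℕ) (Z : Fin k → Finset (Fin n)) : Prop :=
  ∃ (σ : Equiv.Perm (Fin k)) (S : Fin k → Finset (Fin n)),
    IsChoice n k Z σ S ∧
    ∀ (σ' : Equiv.Perm (Fin k)) (S' : Fin k → Finset (Fin n)),
      IsChoice n k Z σ' S' → choiceValue n k S' = choiceValue n k S →
        σ' = σ ∧ S' = S

theorem forall_subset_map_iff {ι α β : Type*} {e : α ↪ β} {W : ι → Finset α}
    {S : ι → Finset β} :
    (∀ i, S i ⊆ (W i).map e) ↔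
      ∃ T : ι → Finset α, (∀ i, T i ⊆ W i) ∧ S = fun i => (T i).map e := by
  simp only [Finset.subset_map_iff, Classical.skolem, forall_and, funext_iff]

theorem exists_fin_embedding_map_univ_eq {α : Type*} (s : Finset α) :
    ∃ e : Fin s.card ↪ α, Finset.univ.map e = s := by
  refine ⟨s.equivFin.symm.toEmbedding.trans (Function.Embedding.subtype _), ?_⟩
  rw [← Finset.map_map, Finset.univ_map_equiv_to_embedding, Finset.univ_eq_attach]
  exact Finset.attach_map_val

theorem exists_eq_map_fin_of_forall_subset {ι α : Type*} {Z : ι → Finset α} {s : Finset α}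
    (hZ : ∀ i, Z i ⊆ s) :
    ∃ (e : Fin s.card ↪ α) (W : ι → Finset (Fin s.card)), Z = fun i => (W i).map e := by
  obtain ⟨e, he⟩ := exists_fin_embedding_map_univ_eq s
  obtain ⟨W, -, hW⟩ := forall_subset_map_iff.1 fun i => (hZ i).trans he.ge
  exact ⟨e, W, hW⟩

theorem card_inf_le_card_inf_map {ι α β : Type*} [Fintype α] [DecidableEq α] [Fintype β]
    [DecidableEq β] (e : α ↪ β) (W : ι → Finset α) (I : Finset ι) :
    (I.inf W).card ≤ (I.inf fun i => (W i).map e).card := by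
  rw [← Finset.card_map e]
  exact Finset.card_le_card <| Finset.le_inf fun _ hi => Finset.map_subset_map.2 (Finset.inf_le hi)

section GroundSetEmbedding

variable {m n k : ℕ} {W : Fin k → Finset (Fin m)}

theorem isChoice_map_iff {e : Fin m ↪ Fin n} {σ : Equiv.Perm (Fin k)}
    {S : Fin k → Finset (Fin n)} :
    IsChoice n k (fun i => (W i).map e) σ S ↔
      ∃ T : Fin k → Finset (Fin m), IsChoice m k W σ T ∧ S = fun i => (T i).map e := by
  simp only [IsChoice, forall_and, forall_subset_map_iff]
  constructor
  · rintro ⟨⟨T, hTW, rfl⟩, hcard⟩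
    exact ⟨T, ⟨hTW, by simpa only [Finset.card_map] using hcard⟩, rfl⟩
  · rintro ⟨T, ⟨hTW, hcard⟩, rfl⟩
    exact ⟨⟨T, hTW, rfl⟩, by simpa only [Finset.card_map] using hcard⟩

theorem choiceValue_map (e : Fin m ↪ Fin n) (T : Fin k → Finset (Fin m)) :
    choiceValue n k (fun i => (T i).map e) = (choiceValue m k T).map e :=
  (map_sum (Multiset.mapAddMonoidHom e) (fun i => (T i).val) Finset.univ).symm

theorem HasUniqueChoice.map (h : HasUniqueChoice m k W) (e : Fin m ↪ Fin n) :
    HasUniqueChoice n k fun i => (W i).map e := by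
  obtain ⟨σ, T, hT, huniq⟩ := h
  refine ⟨σ, fun i => (T i).map e, isChoice_map_iff.2 ⟨T, hT, rfl⟩, fun σ' S' hS' hvalue => ?_⟩
  obtain ⟨T', hT', rfl⟩ := isChoice_map_iff.1 hS'
  rw [choiceValue_map, choiceValue_map] at hvalue
  obtain ⟨rfl, rfl⟩ := huniq σ' T' hT' (Multiset.map_injective e.injective hvalue)
  exact ⟨rfl, rfl⟩

end GroundSetEmbedding

/-- To verify the Unique-Multiset Conjecture for a fixed `k`, it suffices to verify it
for all ground sets of size `n ≤ k (k - 1)`. -/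
theorem unique_multiset_reduction (k : ℕ) (hk : 1 ≤ k)
    (hsmall : ∀ n : ℕ, n ≤ k * (k - 1) → ∀ Z : Fin k → Finset (Fin n),
      (∀ i, (Z i).card = k - 1) →
      (∀ I : Finset (Fin k), I.Nonempty → (I.inf Z).card ≤ k - I.card) →
      HasUniqueChoice n k Z) :
    ∀ n : ℕ, 1 ≤ n → ∀ Z : Fin k → Finset (Fin n),
      (∀ i, (Z i).card = k - 1) →
      (∀ I : Finset (Fin k), I.Nonempty → (I.inf Z).card ≤ k - I.card) →
      HasUniqueChoice n k Z := by
  intro n _ Z hcard hinter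
  obtain ⟨U, hUcard, hZU⟩ : ∃ U : Finset (Fin n), U.card ≤ k * (k - 1) ∧ ∀ i, Z i ⊆ U := by
    refine ⟨Finset.univ.biUnion Z, ?_, fun i => Finset.subset_biUnion_of_mem Z (Finset.mem_univ i)⟩
    simpa only [Finset.card_fin] using
      Finset.card_biUnion_le_card_mul Finset.univ Z (k - 1) fun i _ => (hcard i).le
  obtain ⟨e, W, rfl⟩ := exists_eq_map_fin_of_forall_subset hZU
  have hWcard : ∀ i, (W i).card = k - 1 := by simpa only [Finset.card_map] using hcard
  have hWinter : ∀ I : Finset (Fin k), I.Nonempty → (I.inf W).card ≤ k - I.card := fun I hI =>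
    (card_inf_le_card_inf_map e W I).trans (hinter I hI)
  exact (hsmall U.card hUcard W hWcard hWinter).map e
end
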